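/- Let G=(V,E) be a bipartite exchange network with weights w_e ∈ [0,1], let κ∈(0,1), and take any ξ ∈ (0,1) and η ∈ (0,1). Construct a perturbed instance with weights w̄_e = w_e + ηU_e, where the U_e are i.i.d. uniform on [0,1]. Then there exists a constant C = C(κ) < ∞ such that, setting T* = C (n²|E|/(ηξ))², the following holds with probability at least 1 − ξ: there is a matching M such that for all t ≥ T*, the iterate α^t of the natural dynamics on the perturbed instance induces M (independently of t), and (γ^t, M) is an ε(t)-NB solution of the perturbed instance with ε(t) = 12/√(π κ(1−κ) t). -/

import Mathlib

namespace EN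

open Finset

variable {V : Type*}

/-- The nonnegative part `(x)₊ = max (x, 0)`. -/
noncomputable def pos (x : ℝ) : ℝ := max x 0

variable [Fintype V] [DecidableEq V]

/-- The maximum of `f` over a finite set of vertices (`0` over the empty set). -/
noncomputable def fmax (s : Finset V) (f : V → ℝ) : ℝ := ⨆ k ∈ s, f k

/-- The offer from `i` to `j` given messages `α` and weights `w`:
`m_{i→j} = (w_{ij} − α_{i\j})₊ − (1/2) (w_{ij} − α_{i\j} − α_{j\i})₊`. -/
noncomputable def offer (w α : V → V → ℝ) (i j : V) : ℝ :=
  pos (w i j - α i j) - (1 / 2) * pos (w i j - α i j - α j i)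

/-- The update operator `T` of the natural dynamics:
`(Tα)_{i\j} = max_{k ∈ ∂i \ j} m_{k→i}`. -/
noncomputable def upd (G : SimpleGraph V) [DecidableRel G.Adj] (w α : V → V → ℝ)
    (i j : V) : ℝ :=
  fmax ((G.neighborFinset i).erase j) fun k => offer w α k i

/-- The earnings estimate `γ_i = max_{k ∈ ∂i} m_{k→i}`. -/
noncomputable def earn (G : SimpleGraph V) [DecidableRel G.Adj] (w α : V → V → ℝ)
    (i : V) : ℝ :=
  fmax (G.neighborFinset i) fun k => offer w α k i

/-- Exchange network weights: symmetric and positive on every edge. -/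
def GoodW (G : SimpleGraph V) (w : V → V → ℝ) : Prop :=
  (∀ i j, w i j = w j i) ∧ ∀ i j, G.Adj i j → 0 < w i j

/-- A valid message vector: nonnegative on all directed edges. -/
def ValidMsg (G : SimpleGraph V) (α : V → V → ℝ) : Prop :=
  ∀ i j, G.Adj i j → 0 ≤ α i j

/-- Fixed point of the natural-dynamics update operator. -/
def IsFixedPt (G : SimpleGraph V) [DecidableRel G.Adj] (w α : V → V → ℝ) : Prop :=
  ∀ i j, G.Adj i j → upd G w α i j = α i j

/-- `ε`-fixed point. -/
def IsEpsFixedPt (G : SimpleGraph V) [DecidableRel G.Adj] (w α : V → V → ℝ) (ε : ℝ) : Prop :=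
  ∀ i j, G.Adj i j → |α i j - upd G w α i j| ≤ ε

/-- The natural dynamics with damping factor `κ`: `α^{t+1} = (1−κ) α^t + κ T α^t`. -/
noncomputable def dyn (G : SimpleGraph V) [DecidableRel G.Adj] (w : V → V → ℝ) (κ : ℝ)
    (α0 : V → V → ℝ) : ℕ → V → V → ℝ
  | 0 => α0
  | t + 1 => fun i j =>
      (1 - κ) * dyn G w κ α0 t i j + κ * upd G w (dyn G w κ α0 t) i j

/-- Sup norm over directed edges. -/
noncomputable def msgSup (G : SimpleGraph V) [DecidableRel G.Adj] (f : V → V → ℝ) : ℝ :=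
  ⨆ p : V × V, if G.Adj p.1 p.2 then |f p.1 p.2| else 0

/-- `M` is a matching of `G`: a symmetric subrelation of adjacency pairing each node
with at most one partner. -/
structure IsMatching (G : SimpleGraph V) (M : V → V → Prop) : Prop where
  subset : ∀ i j, M i j → G.Adj i j
  symm : ∀ i j, M i j → M j i
  unique : ∀ i j k, M i j → M i k → j = k

/-- `(M, γ)` is a trade outcome. -/
def IsOutcome (G : SimpleGraph V) (w : V → V → ℝ) (M : V → V → Prop) (γ : V → ℝ) : Prop :=
  IsMatching G M ∧ (∀ i, 0 ≤ γ i) ∧ (∀ i j, M i j → γ i + γ j = w i j) ∧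
    ∀ i, (∀ j, ¬M i j) → γ i = 0

/-- Stability of an outcome. -/
def Stable (G : SimpleGraph V) (w : V → V → ℝ) (M : V → V → Prop) (γ : V → ℝ) : Prop :=
  ∀ i j, G.Adj i j → ¬M i j → w i j ≤ γ i + γ j

/-- The best alternative of `i` excluding `j`: `max_{k ∈ ∂i \ j} (w_{ik} − γ_k)₊`. -/
noncomputable def bestAlt (G : SimpleGraph V) [DecidableRel G.Adj] (w : V → V → ℝ)
    (γ : V → ℝ) (i j : V) : ℝ :=
  fmax ((G.neighborFinset i).erase j) fun k => pos (w i k - γ k)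

/-- Balance of an outcome. -/
def Balanced (G : SimpleGraph V) [DecidableRel G.Adj] (w : V → V → ℝ) (M : V → V → Prop)
    (γ : V → ℝ) : Prop :=
  ∀ i j, M i j → γ i - bestAlt G w γ i j = γ j - bestAlt G w γ j i

/-- Nash bargaining solution: a stable and balanced trade outcome. -/
def IsNBSolution (G : SimpleGraph V) [DecidableRel G.Adj] (w : V → V → ℝ)
    (M : V → V → Prop) (γ : V → ℝ) : Prop :=
  IsOutcome G w M γ ∧ Stable G w M γ ∧ Balanced G w M γ

/-- `ε`-balance. -/
def EpsBalanced (G : SimpleGraph V) [DecidableRel G.Adj] (w : V → V → ℝ)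
    (M : V → V → Prop) (γ : V → ℝ) (ε : ℝ) : Prop :=
  ∀ i j, M i j → |(γ i - bestAlt G w γ i j) - (γ j - bestAlt G w γ j i)| ≤ ε

/-- `ε`-Nash bargaining solution. -/
def IsEpsNB (G : SimpleGraph V) [DecidableRel G.Adj] (w : V → V → ℝ)
    (M : V → V → Prop) (γ : V → ℝ) (ε : ℝ) : Prop :=
  IsOutcome G w M γ ∧ Stable G w M γ ∧ EpsBalanced G w M γ ε

/-- Feasible point of the LP relaxation of maximum weight matching. -/
def LPFeasible (G : SimpleGraph V) [DecidableRel G.Adj] (x : V → V → ℝ) : Prop :=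
  (∀ i j, x i j = x j i) ∧ (∀ i j, 0 ≤ x i j) ∧ (∀ i j, ¬G.Adj i j → x i j = 0) ∧
    ∀ i, ∑ j ∈ G.neighborFinset i, x i j ≤ 1

/-- LP objective `Σ_{(i,j)∈E} w_{ij} x_{ij}` (each undirected edge counted once). -/
noncomputable def LPval (G : SimpleGraph V) [DecidableRel G.Adj] (w x : V → V → ℝ) : ℝ :=
  (1 / 2) * ∑ i, ∑ j ∈ G.neighborFinset i, w i j * x i j

/-- Optimal point of the LP relaxation of maximum weight matching. -/
def LPOptimal (G : SimpleGraph V) [DecidableRel G.Adj] (w x : V → V → ℝ) : Prop :=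
  LPFeasible G x ∧ ∀ y, LPFeasible G y → LPval G w y ≤ LPval G w x

def Integral (x : V → V → ℝ) : Prop := ∀ i j, x i j = 0 ∨ x i j = 1

def HalfIntegral (x : V → V → ℝ) : Prop := ∀ i j, x i j = 0 ∨ x i j = 1 / 2 ∨ x i j = 1

open Classical in
/-- The LP point associated to a matching. -/
noncomputable def mInd (M : V → V → Prop) (i j : V) : ℝ := if M i j then 1 else 0

/-- The state with offers `m` induces the matching `M`: every node receiving a positive
offer is matched and receives its unique best offer from its partner, and every node
with zero earnings is unmatched. -/
def Induces (G : SimpleGraph V) [DecidableRel G.Adj] (m : V → V → ℝ)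
    (M : V → V → Prop) : Prop :=
  IsMatching G M ∧
    (∀ i, (∃ k, G.Adj i k ∧ 0 < m k i) →
      ∃ j, M i j ∧ ∀ k, G.Adj i k → k ≠ j → m k i < m j i) ∧
    ∀ i, (fmax (G.neighborFinset i) fun k => m k i) = 0 → ∀ j, ¬M i j

/-- Feasibility for the dual LP. -/
def DualFeasible (G : SimpleGraph V) (w : V → V → ℝ) (y : V → ℝ) : Prop :=
  (∀ i, 0 ≤ y i) ∧ ∀ i j, G.Adj i j → w i j ≤ y i + y j

/-- Optimality for the dual LP. -/
def DualOptimal (G : SimpleGraph V) (w : V → V → ℝ) (y : V → ℝ) : Prop :=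
  DualFeasible G w y ∧ ∀ z, DualFeasible G w z → ∑ i, y i ≤ ∑ i, z i

/-- The unmatched balance property at every edge. -/
def UnmatchedBalance (G : SimpleGraph V) [DecidableRel G.Adj] (w : V → V → ℝ)
    (y : V → ℝ) : Prop :=
  ∀ i j, G.Adj i j → y i - bestAlt G w y i j = y j - bestAlt G w y j i

/-! ### Unequal division -/

/-- Valid split fractions: `r_{ij} ∈ (0,1)` with `r_{ij} + r_{ji} = 1` on every edge. -/
def GoodR (G : SimpleGraph V) (r : V → V → ℝ) : Prop :=
  ∀ i j, G.Adj i j → 0 < r i j ∧ r i j < 1 ∧ r i j + r j i = 1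

/-- The UD offer from `i` to `j`. -/
noncomputable def offerUD (w r α : V → V → ℝ) (i j : V) : ℝ :=
  pos (w i j - α i j) - r i j * pos (w i j - α i j - α j i)

/-- The UD update operator. -/
noncomputable def updUD (G : SimpleGraph V) [DecidableRel G.Adj] (w r α : V → V → ℝ)
    (i j : V) : ℝ :=
  fmax ((G.neighborFinset i).erase j) fun k => offerUD w r α k i

/-- The UD earnings estimate. -/
noncomputable def earnUD (G : SimpleGraph V) [DecidableRel G.Adj] (w r α : V → V → ℝ)
    (i : V) : ℝ :=
  fmax (G.neighborFinset i) fun k => offerUD w r α k i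

/-- Fixed point of the UD update operator. -/
def IsFixedPtUD (G : SimpleGraph V) [DecidableRel G.Adj] (w r α : V → V → ℝ) : Prop :=
  ∀ i j, G.Adj i j → updUD G w r α i j = α i j

/-- Correct division. -/
def CorrectDiv (G : SimpleGraph V) [DecidableRel G.Adj] (w r : V → V → ℝ)
    (M : V → V → Prop) (γ : V → ℝ) : Prop :=
  ∀ i j, M i j →
    (1 / r i j) * (γ i - bestAlt G w γ i j) = (1 / r j i) * (γ j - bestAlt G w γ j i)

/-- UD solution: a stable trade outcome satisfying correct division. -/
def IsUDSolution (G : SimpleGraph V) [DecidableRel G.Adj] (w r : V → V → ℝ)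
    (M : V → V → Prop) (γ : V → ℝ) : Prop :=
  IsOutcome G w M γ ∧ Stable G w M γ ∧ CorrectDiv G w r M γ

/-- Edge surplus. -/
noncomputable def surp (G : SimpleGraph V) [DecidableRel G.Adj] (w : V → V → ℝ)
    (γ : V → ℝ) (i j : V) : ℝ :=
  w i j - bestAlt G w γ i j - bestAlt G w γ j i

open Classical in
/-- The rebalanced allocation `γ^reb`. -/
noncomputable def reb (G : SimpleGraph V) [DecidableRel G.Adj] (w r : V → V → ℝ)
    (M : V → V → Prop) (γ : V → ℝ) (i : V) : ℝ :=
  if h : ∃ j, M i j then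
    bestAlt G w γ i h.choose + r i h.choose * surp G w γ i h.choose
  else 0

/-- The Edge Rebalancing iteration `γ^{t+1} = κ γ^reb(γ^t) + (1−κ) γ^t`. -/
noncomputable def rebIter (G : SimpleGraph V) [DecidableRel G.Adj] (w r : V → V → ℝ)
    (M : V → V → Prop) (κ : ℝ) (γ0 : V → ℝ) : ℕ → V → ℝ
  | 0 => γ0
  | t + 1 => fun i =>
      κ * reb G w r M (rebIter G w r M κ γ0 t) i + (1 - κ) * rebIter G w r M κ γ0 t i

/-- The perturbed weights `w̄_{ij} = w_{ij} + η U_{ij}`, where `U` is read off from the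
sample point `ω` (one coordinate per undirected edge). -/
noncomputable def pertW {V : Type*} [Fintype V] [DecidableEq V] (G : SimpleGraph V)
    [DecidableRel G.Adj] (w : V → V → ℝ) (η : ℝ)
    (ω : {e : Sym2 V // e ∈ G.edgeFinset} → ℝ) (i j : V) : ℝ :=
  w i j + η * (if h : G.Adj i j then
    ω ⟨s(i, j), SimpleGraph.mem_edgeFinset.mpr ((SimpleGraph.mem_edgeSet G).mpr h)⟩ else 0)

/-- binomial expectation operator -/
noncomputable def bE (p : ℝ) : ℕ → (ℕ → ℝ) → ℝ
  | 0, f => f 0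
  | m + 1, f => (1 - p) * bE p m f + p * bE p m (fun x => f (x + 1))

theorem bE_lin (p : ℝ) (m : ℕ) : ∀ (f g : ℕ → ℝ) (a b : ℝ),
    bE p m (fun x => a * f x + b * g x) = a * bE p m f + b * bE p m g := by
  induction m with
  | zero => intro f g a b; simp [bE]
  | succ m ih =>
    intro f g a b
    simp only [bE]
    rw [ih f g a b, ih (fun x => f (x+1)) (fun x => g (x+1)) a b]
    ring

theorem bE_mono {p : ℝ} (h0 : 0 ≤ p) (h1 : p ≤ 1) (m : ℕ) : ∀ (f g : ℕ → ℝ), (∀ x, f x ≤ g x) →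
    bE p m f ≤ bE p m g := by
  induction m with
  | zero => intro f g h; simpa [bE] using h 0
  | succ m ih =>
    intro f g h
    simp only [bE]
    have h2 := ih f g h
    have h3 := ih (fun x => f (x+1)) (fun x => g (x+1)) (fun x => h (x+1))
    have : 0 ≤ 1 - p := by linarith
    gcongr

theorem bE_const (p : ℝ) (m : ℕ) (c : ℝ) : bE p m (fun _ => c) = c := by
  induction m with
  | zero => simp [bE]
  | succ m ih => simp only [bE]; rw [ih]; ring

theorem bE_size (p : ℝ) (m : ℕ) : ∀ f : ℕ → ℝ,
    (m + 1) * p * bE p m (fun x => f (x + 1)) = bE p (m + 1) (fun x => x * f x) := by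
  induction m with
  | zero => intro f; simp [bE]
  | succ m ih =>
    intro f
    have e1 := ih f
    have e2 := ih (fun x => f (x + 1))
    have e3 := bE_lin p (m+1) (fun x => x * f (x+1)) (fun x => f (x+1)) 1 1
    have e4 : bE p (m + 1 + 1) (fun x => x * f x) =
      (1 - p) * bE p (m+1) (fun x => x * f x) +
        p * bE p (m+1) (fun x => 1 * (x * f (x+1)) + 1 * f (x+1)) := by
      conv_lhs => rw [bE]
      congr 3
      ext x; push_cast; ring
    rw [e4, e3, ← e1, ← e2]
    push_cast
    have e5 : bE p (m+1) (fun x => f (x+1)) = (1 - p) * bE p m (fun x => f (x+1)) +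
      p * bE p m (fun x => f (x+1+1)) := rfl
    rw [e5]; ring

/-- killed simple walk survival probability -/
noncomputable def sw : ℕ → ℕ → ℝ
  | _, 0 => 0
  | 0, _ + 1 => 1
  | K + 1, h + 1 => (sw K (h + 2) + sw K h) / 2

/-- killed lazy walk survival probability -/
noncomputable def lw (κ : ℝ) : ℕ → ℕ → ℝ
  | _, 0 => 0
  | 0, _ + 1 => 1
  | m + 1, h + 1 => ((1 - κ) ^ 2 + κ ^ 2) * lw κ m (h + 1) + κ * (1 - κ) * (lw κ m (h + 2) + lw κ m h)

theorem sw_zero (K : ℕ) : sw K 0 = 0 := by cases K <;> simp [sw]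
theorem lw_zero (κ : ℝ) (K : ℕ) : lw κ K 0 = 0 := by cases K <;> simp [lw]

theorem lw_eq (κ : ℝ) (m : ℕ) : ∀ h, lw κ m h = bE (2 * κ * (1 - κ)) m (fun K => sw K h) := by
  induction m with
  | zero => intro h; cases h <;> simp [lw, sw, bE]
  | succ m ih =>
    intro h
    cases h with
    | zero => simp only [sw_zero, lw_zero]; rw [bE_const]
    | succ h =>
      simp only [lw, bE]
      rw [ih, ih, ih]
      have : (fun K => sw (K+1) (h+1)) = fun K => (1/2) * sw K (h+2) + (1/2) * sw K h := by
        ext K; simp only [sw]; ring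
      rw [this, bE_lin]
      ring

def Fb (K x : ℕ) : ℕ := ∑ j ∈ Finset.range x, K.choose j

theorem Fb_succ (K x : ℕ) : Fb (K+1) (x+1) = Fb K (x+1) + Fb K x := by
  unfold Fb
  rw [Finset.sum_range_succ', Finset.sum_range_succ' (fun j => K.choose j)]
  simp only [Nat.choose_succ_succ, Finset.sum_add_distrib, Nat.choose_zero_right]
  ring

theorem sw_formula (K : ℕ) : ∀ h, (2:ℝ) ^ K * sw K h = Fb K ((K + h + 1) / 2) - Fb K ((K - h + 1) / 2) := by
  induction K with
  | zero =>
    intro h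
    cases h with
    | zero => simp [sw, Fb]
    | succ h =>
      have : (0 + (h+1) + 1) / 2 = h / 2 + 1 := by omega
      rw [this]
      simp [sw, Fb, Finset.sum_range_succ']
  | succ K ih =>
    intro h
    cases h with
    | zero => simp [sw]
    | succ h =>
      have e1 := ih (h+2)
      have e2 := ih h
      simp only [sw]
      have : (2:ℝ)^(K+1) * ((sw K (h+2) + sw K h)/2) = 2^K * sw K (h+2) + 2^K * sw K h := by
        rw [pow_succ]; ring
      rw [this, e1, e2]
      have a1 : (K + 1 + (h+1) + 1)/2 = (K+h+1)/2 + 1 := by omega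
      have a2 : (K + (h+2) + 1)/2 = (K+h+1)/2 + 1 := by omega
      have a3 : (K + 1 - (h+1) + 1)/2 = (K - h + 1)/2 := by omega
      rw [a1, a2, a3, Fb_succ]
      by_cases hk : h + 1 ≤ K
      · have a4 : (K - h + 1)/2 = (K - (h+2) + 1)/2 + 1 := by omega
        rw [a4, Fb_succ]; push_cast; ring
      · have a4 : (K - h + 1)/2 = 0 := by omega
        have a5 : (K - (h+2) + 1)/2 = 0 := by omega
        rw [a4, a5]; simp [Fb]

theorem sw_one (K : ℕ) : (2:ℝ) ^ K * sw K 1 = K.choose (K/2) := by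
  rw [sw_formula]
  have a1 : (K + 1 + 1)/2 = K/2 + 1 := by omega
  have a2 : (K - 1 + 1)/2 = K/2 := by omega
  rw [a1, a2]
  simp [Fb, Finset.sum_range_succ]

theorem cb_bound (k : ℕ) : (k.centralBinom : ℝ) ^ 2 * (2 * k + 1) ≤ 16 ^ k := by
  induction k with
  | zero => simp
  | succ k ih =>
    have h := Nat.succ_mul_centralBinom_succ k
    have h' : ((k:ℝ) + 1) * (k+1).centralBinom = 2 * (2 * k + 1) * k.centralBinom := by exact_mod_cast h
    push_cast
    set x : ℝ := (k:ℝ) with hx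
    have hx0 : 0 ≤ x := by positivity
    set A : ℝ := (((k+1).centralBinom : ℕ) : ℝ) with hA
    set B : ℝ := ((k.centralBinom : ℕ) : ℝ) with hB
    have hk : (0:ℝ) < (x+1)^2 := by positivity
    have : (x+1)^2 * (A^2 * (2 * (x+1) + 1)) ≤ (x+1)^2 * 16^(k+1) := by
      calc (x+1)^2 * (A^2 * (2 * (x+1) + 1))
          = ((x+1) * A)^2 * (2*x+3) := by ring
        _ = (4 * (2*x+1) * (2*x+3)) * (B^2 * (2*x+1)) := by rw [h']; ring
        _ ≤ (4 * (2*x+1) * (2*x+3)) * 16^k := by gcongr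
        _ ≤ (16 * (x+1)^2) * 16^k := by
            apply mul_le_mul_of_nonneg_right _ (by positivity); nlinarith
        _ = _ := by ring
    exact le_of_mul_le_mul_left this hk

theorem ch_bound (K : ℕ) : (K.choose (K/2) : ℝ) ^ 2 * (K + 1) ≤ (2 ^ K) ^ 2 := by
  rcases Nat.even_or_odd' K with ⟨k, rfl | rfl⟩
  · have := cb_bound k
    rw [Nat.centralBinom] at this
    have e : 2 * k / 2 = k := by omega
    rw [e]
    push_cast
    calc _ ≤ (16:ℝ)^k := this
      _ = _ := by rw [← pow_mul, show 2 * k * 2 = 4 * k by ring, pow_mul]; norm_num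
  · have := cb_bound (k+1)
    have e : (2 * k + 1) / 2 = k := by omega
    rw [e]
    have h2 : ((k+1).centralBinom) = 2 * (2*k+1).choose k := by
      rw [Nat.centralBinom, show 2 * (k+1) = (2*k+1) + 1 by ring, Nat.choose_succ_succ]
      rw [Nat.choose_symm_half]; ring
    rw [h2] at this
    push_cast at this ⊢
    have e3 : ((2:ℝ)^(2*k+1))^2 = 4 * 16^k := by
      rw [← pow_mul, show (2*k+1)*2 = 4*k + 2 by ring, pow_add, pow_mul]; norm_num; ring
    rw [e3]
    have : 4 * (((2*k+1).choose k:ℝ)^2 * (2*(k+1)+1)) ≤ 16 * 16^k := by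
      calc _ = (2 * ((2*k+1).choose k:ℝ))^2 * (2*(k+1)+1) := by ring
        _ ≤ _ := this
        _ = _ := by ring
    nlinarith [sq_nonneg ((2*k+1).choose k:ℝ)]

theorem sw_bound (K : ℕ) : sw K 1 ≤ 1 / Real.sqrt (K + 1) := by
  have h1 := sw_one K
  have h2 := ch_bound K
  rw [← h1] at h2
  have hp : (0:ℝ) < (2^K)^2 := by positivity
  have h3 : (sw K 1)^2 * (K+1) ≤ 1 := by
    have : (2^K)^2 * ((sw K 1)^2 * (K+1)) ≤ (2^K)^2 * 1 := by
      calc _ = (2^K * sw K 1)^2 * (K+1) := by ring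
        _ ≤ _ := by simpa using h2
    exact le_of_mul_le_mul_left this hp
  have hs : 0 < Real.sqrt (K+1) := Real.sqrt_pos.mpr (by positivity)
  rw [le_div_iff₀ hs]
  have : (sw K 1 * Real.sqrt (K+1))^2 ≤ 1 := by
    rw [mul_pow, Real.sq_sqrt (by positivity)]; exact h3
  nlinarith

theorem lw_bound {κ : ℝ} (h0 : 0 < κ) (h1 : κ < 1) (m : ℕ) :
    lw κ m 1 ≤ 1 / Real.sqrt (2 * κ * (1 - κ) * (m + 1)) := by
  have hp : 0 < 2 * κ * (1 - κ) := by nlinarith [mul_pos h0 (sub_pos.mpr h1)]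
  have hp1 : 2 * κ * (1 - κ) ≤ 1 := by nlinarith [sq_nonneg (κ - 1/2)]
  set p := 2 * κ * (1 - κ) with hpd
  rw [lw_eq, ← hpd]
  set L := Real.sqrt (p * (m+1)) with hL
  have hLp : 0 < L := Real.sqrt_pos.mpr (by positivity)
  have hL2 : L^2 = p * (m+1) := Real.sq_sqrt (by positivity)
  have key : ∀ K : ℕ, sw K 1 ≤ (L/2) * (1 / ((K+1 : ℕ):ℝ)) + (1/(2*L)) * 1 := by
    intro K
    refine (sw_bound K).trans ?_
    set r := Real.sqrt (K+1) with hr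
    have hrp : 0 < r := Real.sqrt_pos.mpr (by positivity)
    have hr2 : r^2 = K+1 := Real.sq_sqrt (by positivity)
    push_cast
    rw [← hr2]
    have : (L/2) * (1 / r^2) + (1/(2*L)) * 1 - 1 / r = (L - r)^2/(2 * L * r^2) := by
      field_simp; ring
    have h2 : 0 ≤ (L - r)^2/(2 * L * r^2) := by positivity
    linarith
  refine (bE_mono hp.le hp1 m _ _ key).trans ?_
  rw [bE_lin p m (fun K => 1 / ((K+1 : ℕ):ℝ)) (fun _ => 1), bE_const]
  have hs := bE_size p m (fun x => 1 / (x:ℝ))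
  have hs2 : bE p (m+1) (fun x => (x:ℝ) * (1/(x:ℝ))) ≤ 1 := by
    calc _ ≤ bE p (m+1) (fun _ => 1) := by
          apply bE_mono hp.le hp1
          intro x
          rcases eq_or_ne (x:ℝ) 0 with h | h
          · simp [h]
          · field_simp; rfl
      _ = 1 := bE_const _ _ _
  rw [← hs] at hs2
  have : L^2 * bE p m (fun x => 1 / ((x+1:ℕ):ℝ)) ≤ 1 := by
    rw [hL2]; linarith
  set B := bE p m (fun x => 1 / ((x+1:ℕ):ℝ))
  have h3 : L/2 * B ≤ 1/(2*L) := by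
    rw [le_div_iff₀ (by positivity)]; nlinarith
  calc _ ≤ 1/(2*L) + 1/(2*L) * 1 := by linarith
    _ = 1/L := by field_simp; norm_num

/-! ### basic lemmas on the operators -/
section basic
set_option linter.unusedSectionVars false
variable {V : Type*} [Fintype V] [DecidableEq V]

theorem fmax_bdd (s : Finset V) (f : V → ℝ) : BddAbove (Set.range fun k => ⨆ _ : k ∈ s, f k) :=
  Set.finite_range _ |>.bddAbove

theorem le_fmax (s : Finset V) (f : V → ℝ) {k : V} (hk : k ∈ s) : f k ≤ fmax s f := by
  have := le_ciSup (fmax_bdd s f) k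
  simp only [hk, ciSup_unique] at this
  exact this

theorem fmax_nonneg {s : Finset V} (f : V → ℝ) {i : V} (hi : i ∉ s) : 0 ≤ fmax s f := by
  have := le_ciSup (fmax_bdd s f) i
  simp only [hi, Real.iSup_of_isEmpty] at this
  exact this

theorem fmax_le {s : Finset V} {f : V → ℝ} {c : ℝ} (hc : 0 ≤ c) (h : ∀ k ∈ s, f k ≤ c) :
    fmax s f ≤ c := by
  unfold fmax
  apply Real.iSup_le _ hc
  intro k
  exact Real.iSup_le (fun hk => h k hk) hc

theorem fmax_attained {s : Finset V} {f : V → ℝ} (h : 0 < fmax s f) :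
    ∃ k ∈ s, f k = fmax s f := by
  by_contra hcon
  push Not at hcon
  have hlt : ∀ k ∈ s, f k < fmax s f := fun k hk => lt_of_le_of_ne (le_fmax s f hk) (hcon k hk)
  rcases s.eq_empty_or_nonempty with rfl | hs
  · have := fmax_le (s := (∅ : Finset V)) (f := f) (c := 0) le_rfl (by simp)
    linarith
  · obtain ⟨k, hk, hmax⟩ := s.exists_max_image f hs
    have h2 : fmax s f ≤ max 0 (f k) := fmax_le (le_max_left _ _) (fun l hl => (hmax l hl).trans (le_max_right _ _))
    have h3 := hlt k hk
    rcases le_total 0 (f k) with h4 | h4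
    · rw [max_eq_right h4] at h2; linarith
    · rw [max_eq_left h4] at h2; linarith

theorem fmax_lip {s : Finset V} {f g : V → ℝ} {c : ℝ} (hc : 0 ≤ c) {i : V} (hi : i ∉ s)
    (h : ∀ k ∈ s, |f k - g k| ≤ c) : |fmax s f - fmax s g| ≤ c := by
  have h1 : fmax s f ≤ fmax s g + c := by
    apply fmax_le (by linarith [fmax_nonneg g hi])
    intro k hk
    have := abs_le.mp (h k hk)
    linarith [le_fmax s g hk]
  have h2 : fmax s g ≤ fmax s f + c := by
    apply fmax_le (by linarith [fmax_nonneg f hi])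
    intro k hk
    have := abs_le.mp (h k hk)
    linarith [le_fmax s f hk]
  rw [abs_le]; constructor <;> linarith

theorem offer_lo {w α : V → V → ℝ} {i j : V} (h : α i j + α j i ≤ w i j) (h0 : 0 ≤ α j i) :
    offer w α i j = (w i j - α i j + α j i) / 2 := by
  unfold offer pos
  rw [max_eq_left (by linarith), max_eq_left (by linarith)]; ring

theorem offer_hi {w α : V → V → ℝ} {i j : V} (h : w i j ≤ α i j + α j i) :
    offer w α i j = max (w i j - α i j) 0 := by
  unfold offer pos
  rw [max_eq_right (b := (0:ℝ)) (a := w i j - α i j - α j i) (by linarith)]; ring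

theorem offer_eq {w α : V → V → ℝ} {i j : V} (h0 : 0 ≤ α j i) :
    offer w α i j = max 0 (min (w i j - α i j) ((w i j - α i j + α j i) / 2)) := by
  rcases le_total (α i j + α j i) (w i j) with h | h
  · rw [offer_lo h h0, min_eq_right (by linarith), max_eq_right (by linarith)]
  · rw [offer_hi h, min_eq_left (by linarith), max_comm]

theorem offer_nonneg {w α : V → V → ℝ} {i j : V} (h0 : 0 ≤ α j i) : 0 ≤ offer w α i j := by
  rw [offer_eq h0]; exact le_max_left _ _

theorem offer_lip {w α β : V → V → ℝ} {i j : V} {c : ℝ} (h0 : 0 ≤ α j i) (h1 : 0 ≤ β j i)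
    (h2 : |α i j - β i j| ≤ c) (h3 : |α j i - β j i| ≤ c) :
    |offer w α i j - offer w β i j| ≤ c := by
  rw [offer_eq h0, offer_eq h1]
  have hc : 0 ≤ c := (abs_nonneg _).trans h2
  refine (abs_max_sub_max_le_max _ _ _ _).trans ?_
  refine max_le (by simpa using hc) ?_
  refine (abs_min_sub_min_le_max _ _ _ _).trans ?_
  rw [abs_le] at h2 h3
  refine max_le ?_ ?_ <;> rw [abs_le] <;> constructor <;> linarith

theorem offer_le {w α : V → V → ℝ} {i j : V} (hw : 0 ≤ w i j) (h0 : 0 ≤ α j i) (h1 : 0 ≤ α i j) :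
    offer w α i j ≤ w i j := by
  rw [offer_eq h0]
  refine max_le hw ((min_le_left _ _).trans (by linarith))

variable (G : SimpleGraph V) [DecidableRel G.Adj]

theorem upd_notin (i j : V) : i ∉ (G.neighborFinset i).erase j := by simp
theorem earn_notin (i : V) : i ∉ (G.neighborFinset i) := by simp

variable {G}

theorem upd_nonneg (w α : V → V → ℝ) (i j : V) : 0 ≤ upd G w α i j :=
  fmax_nonneg _ (upd_notin G i j)

theorem earn_nonneg (w α : V → V → ℝ) (i : V) : 0 ≤ earn G w α i :=
  fmax_nonneg _ (earn_notin G i)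

theorem le_upd {w α : V → V → ℝ} {i j k : V} (h : G.Adj i k) (hk : k ≠ j) :
    offer w α k i ≤ upd G w α i j :=
  le_fmax _ (fun k => offer w α k i) (by simp [h, hk])

theorem le_earn {w α : V → V → ℝ} {i k : V} (h : G.Adj i k) :
    offer w α k i ≤ earn G w α i :=
  le_fmax _ (fun k => offer w α k i) (by simp [h])

theorem upd_le_earn (w α : V → V → ℝ) (i j : V) : upd G w α i j ≤ earn G w α i := by
  apply fmax_le (earn_nonneg w α i)
  intro k hk
  simp at hk
  exact le_earn hk.2

theorem earn_le {w α : V → V → ℝ} {i j : V} :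
    earn G w α i ≤ max (offer w α j i) (upd G w α i j) := by
  apply fmax_le (le_max_of_le_right (upd_nonneg w α i j))
  intro k hk
  simp at hk
  by_cases h : k = j
  · subst h; exact le_max_left _ _
  · exact le_max_of_le_right (le_upd hk h)

theorem upd_attained {w α : V → V → ℝ} {i j : V} (h : 0 < upd G w α i j) :
    ∃ k, G.Adj i k ∧ k ≠ j ∧ offer w α k i = upd G w α i j := by
  obtain ⟨k, hk, h2⟩ := fmax_attained h
  simp at hk
  exact ⟨k, hk.2, hk.1, h2⟩

theorem earn_attained {w α : V → V → ℝ} {i : V} (h : 0 < earn G w α i) :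
    ∃ k, G.Adj i k ∧ offer w α k i = earn G w α i := by
  obtain ⟨k, hk, h2⟩ := fmax_attained h
  simp at hk
  exact ⟨k, hk, h2⟩

theorem upd_lip {w α β : V → V → ℝ} {c : ℝ} (hc : 0 ≤ c) (hα : ValidMsg G α) (hβ : ValidMsg G β)
    (h : ∀ i j, G.Adj i j → |α i j - β i j| ≤ c) (i j : V) :
    |upd G w α i j - upd G w β i j| ≤ c := by
  apply fmax_lip hc (upd_notin G i j)
  intro k hk
  simp at hk
  exact offer_lip (hα _ _ hk.2) (hβ _ _ hk.2) (h _ _ hk.2.symm) (h _ _ hk.2)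

theorem upd_le {w α : V → V → ℝ} {c : ℝ} (hc : 0 ≤ c) (hα : ValidMsg G α)
    (hw : ∀ i j, G.Adj i j → 0 ≤ w i j ∧ w i j ≤ c) (i j : V) : upd G w α i j ≤ c := by
  apply fmax_le hc
  intro k hk
  simp at hk
  exact (offer_le (hw _ _ hk.2.symm).1 (hα _ _ hk.2) (hα _ _ hk.2.symm)).trans (hw _ _ hk.2.symm).2

theorem dyn_range {w α0 : V → V → ℝ} {κ c : ℝ} (h0 : 0 < κ) (h1 : κ < 1) (hc : 0 ≤ c)
    (hw : ∀ i j, G.Adj i j → 0 ≤ w i j ∧ w i j ≤ c)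
    (hα : ∀ i j, G.Adj i j → 0 ≤ α0 i j ∧ α0 i j ≤ c) (t : ℕ) :
    ∀ i j, G.Adj i j → 0 ≤ dyn G w κ α0 t i j ∧ dyn G w κ α0 t i j ≤ c := by
  induction t with
  | zero => exact hα
  | succ t ih =>
    intro i j hij
    have hv : ValidMsg G (dyn G w κ α0 t) := fun i j h => (ih i j h).1
    have a := upd_nonneg (G := G) w (dyn G w κ α0 t) i j
    have b := upd_le hc hv hw i j
    have e := ih i j hij
    simp only [dyn]
    constructor
    · have : 0 ≤ 1 - κ := by linarith
      have := e.1
      positivity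
    · nlinarith

theorem dyn_reg {w α0 : V → V → ℝ} {κ c : ℝ} (h0 : 0 < κ) (h1 : κ < 1) (hc : 0 ≤ c)
    (hw : ∀ i j, G.Adj i j → 0 ≤ w i j ∧ w i j ≤ c)
    (hα : ∀ i j, G.Adj i j → 0 ≤ α0 i j ∧ α0 i j ≤ c) (m : ℕ) :
    (∀ k i j, G.Adj i j → |dyn G w κ α0 m i j - upd G w (dyn G w κ α0 (m + k)) i j| ≤
        c * bE κ k (fun h => lw κ m (h + 1))) ∧
    (∀ k i j, G.Adj i j → |dyn G w κ α0 m i j - dyn G w κ α0 (m + k) i j| ≤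
        c * bE κ k (lw κ m)) := by
  have hr := dyn_range h0 h1 hc hw hα
  have hv : ∀ t, ValidMsg G (dyn G w κ α0 t) := fun t i j h => (hr t i j h).1
  have tri : ∀ a b x y z A B : ℝ, 0 ≤ a → 0 ≤ b → a + b = 1 → |x - z| ≤ A → |y - z| ≤ B →
      |a * x + b * y - z| ≤ a * A + b * B := by
    intro a b x y z A B ha hb hab hx hy
    rw [abs_le] at *
    have e : a * x + b * y - z = a * (x - z) + b * (y - z) := by linear_combination z * hab
    rw [e]
    constructor <;> nlinarith
  have step : ∀ m, (∀ k i j, G.Adj i j →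
      |dyn G w κ α0 m i j - upd G w (dyn G w κ α0 (m + k)) i j| ≤
        c * bE κ k (fun h => lw κ m (h + 1))) →
      (∀ k i j, G.Adj i j → |dyn G w κ α0 m i j - dyn G w κ α0 (m + k) i j| ≤
        c * bE κ k (lw κ m)) := by
    intro m hb k
    induction k with
    | zero => intro i j _; simp [bE, lw_zero]
    | succ k ih =>
      intro i j hij
      rw [← add_assoc, abs_sub_comm]
      simp only [dyn, bE]
      have i1 := ih i j hij
      have i2 := hb k i j hij
      rw [abs_sub_comm] at i1 i2
      exact (tri (1 - κ) κ _ _ _ _ _ (by linarith) h0.le (by ring) i1 i2).trans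
        (le_of_eq (by ring))
  induction m with
  | zero =>
    have hb : (∀ k i j, G.Adj i j →
      |dyn G w κ α0 0 i j - upd G w (dyn G w κ α0 (0 + k)) i j| ≤
        c * bE κ k (fun h => lw κ 0 (h + 1))) := by
      intro k i j hij
      have : (fun h => lw κ 0 (h+1)) = fun _ => 1 := by ext h; simp [lw]
      rw [this, bE_const, mul_one]
      have a := upd_nonneg (G := G) w (dyn G w κ α0 (0+k)) i j
      have b := upd_le hc (hv (0+k)) hw i j
      have e := hr 0 i j hij
      rw [abs_le]; constructor <;> linarith
    exact ⟨hb, step 0 hb⟩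
  | succ m ih =>
    obtain ⟨ihb, iha⟩ := ih
    have hb : (∀ k i j, G.Adj i j →
      |dyn G w κ α0 (m+1) i j - upd G w (dyn G w κ α0 (m + 1 + k)) i j| ≤
        c * bE κ k (fun h => lw κ (m+1) (h + 1))) := by
      intro k i j hij
      have hq : (fun h => lw κ (m+1) (h+1)) = fun h => 1 * (((1 - κ) ^ 2 + κ ^ 2) * lw κ m (h + 1)
          + (κ * (1 - κ)) * lw κ m (h + 2)) + (κ * (1 - κ)) * lw κ m h := by
        ext h; simp only [lw]; ring
      rw [hq, bE_lin κ k (fun h => ((1 - κ) ^ 2 + κ ^ 2) * lw κ m (h + 1)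
          + (κ * (1 - κ)) * lw κ m (h + 2)) (fun h => lw κ m h),
        bE_lin κ k (fun h => lw κ m (h+1)) (fun h => lw κ m (h+2))]
      have e : m + 1 + k = m + (k + 1) := by ring
      rw [e]
      have i1 := ihb (k+1) i j hij
      have hn : 0 ≤ c * bE κ (k+1) (lw κ m) := (abs_nonneg _).trans (iha (k+1) i j hij)
      have i2 := upd_lip (w := w) hn (hv m) (hv (m+(k+1))) (iha (k+1)) i j
      have := tri (1 - κ) κ _ _ _ _ _ (by linarith) h0.le (by ring) i1 i2
      refine this.trans (le_of_eq ?_)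
      simp only [bE]
      ring
    exact ⟨hb, step (m+1) hb⟩

theorem dyn_fix {w α0 : V → V → ℝ} {κ c : ℝ} (h0 : 0 < κ) (h1 : κ < 1) (hc : 0 ≤ c)
    (hw : ∀ i j, G.Adj i j → 0 ≤ w i j ∧ w i j ≤ c)
    (hα : ∀ i j, G.Adj i j → 0 ≤ α0 i j ∧ α0 i j ≤ c) (t : ℕ) (i j : V) (hij : G.Adj i j) :
    |dyn G w κ α0 t i j - upd G w (dyn G w κ α0 t) i j| ≤
      c * (1 / Real.sqrt (2 * κ * (1 - κ) * (t + 1))) := by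
  have := (dyn_reg h0 h1 hc hw hα t).1 0 i j hij
  simp only [bE, add_zero, zero_add] at this
  exact this.trans (mul_le_mul_of_nonneg_left (lw_bound h0 h1 t) hc)

end basic

/-! ### from approximate fixed points to Nash bargaining -/
section core
set_option linter.unusedSectionVars false
variable {V : Type*} [Fintype V] [DecidableEq V] {G : SimpleGraph V} [DecidableRel G.Adj]
  {w α : V → V → ℝ} {ε : ℝ}

theorem offer_sum_le (hs : ∀ i j, w i j = w j i) (hw : ∀ i j, G.Adj i j → 0 < w i j)
    (hα : ValidMsg G α) {i j : V} (h : G.Adj i j) : offer w α i j + offer w α j i ≤ w i j := by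
  have a := hα _ _ h
  have b := hα _ _ h.symm
  have c := hw _ _ h
  have d := hs j i
  rcases le_total (α i j + α j i) (w i j) with h1 | h1
  · rw [offer_lo h1 b, offer_lo (by rw [d]; linarith) a, d]; linarith
  · rw [offer_hi h1, offer_hi (by rw [d]; linarith), d]
    rcases max_cases (w i j - α i j) 0 with h2 | h2 <;>
      rcases max_cases (w i j - α j i) 0 with h3 | h3 <;> linarith

theorem offer_sum_eq (hs : ∀ i j, w i j = w j i)
    (hα : ValidMsg G α) {i j : V} (h : G.Adj i j) (h1 : α i j + α j i ≤ w i j) :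
    offer w α i j + offer w α j i = w i j := by
  have a := hα _ _ h
  have b := hα _ _ h.symm
  have d := hs j i
  rw [offer_lo h1 b, offer_lo (by rw [d]; linarith) a, d]; ring

theorem near (hs : ∀ i j, w i j = w j i)
    (hα : ValidMsg G α) (hf : IsEpsFixedPt G w α ε) {i k : V} {δ : ℝ} (hδ : 0 ≤ δ)
    (h : G.Adj i k) (hp : 0 < offer w α k i) (hb : earn G w α i - δ ≤ offer w α k i) :
    upd G w α k i - 2 * ε - δ ≤ offer w α i k := by
  have a := hα _ _ h
  have b := hα _ _ h.symm
  have d := hs k i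
  have f1 := abs_le.mp (hf _ _ h)
  have f2 := abs_le.mp (hf _ _ h.symm)
  have u := upd_le_earn (G := G) w α i k
  have he : 0 ≤ ε := by linarith
  rcases le_total (α i k + α k i) (w i k) with h1 | h1
  · rw [offer_lo h1 b]; linarith
  · rw [offer_hi h1]
    rw [offer_hi (by rw [d]; linarith), d] at hp hb
    have := le_max_left (w i k - α i k) 0
    rcases max_cases (w i k - α k i) 0 with h3 | h3 <;> linarith

theorem earn_lb (hs : ∀ i j, w i j = w j i)
    (hα : ValidMsg G α) (hf : IsEpsFixedPt G w α ε) {i k : V} (h : G.Adj i k) :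
    w i k - 2 * ε ≤ earn G w α i + earn G w α k := by
  have f1 := abs_le.mp (hf _ _ h)
  have f2 := abs_le.mp (hf _ _ h.symm)
  have u1 := upd_le_earn (G := G) w α i k
  have u2 := upd_le_earn (G := G) w α k i
  have he : 0 ≤ ε := by linarith
  rcases le_total (α i k + α k i) (w i k) with h1 | h1
  · have := offer_sum_eq hs hα h h1
    have := le_earn (w := w) (α := α) h
    have := le_earn (w := w) (α := α) h.symm
    linarith
  · linarith

theorem tight (hs : ∀ i j, w i j = w j i) (hw : ∀ i j, G.Adj i j → 0 < w i j)
    (hα : ValidMsg G α) (hf : IsEpsFixedPt G w α ε) {i k : V} {δ : ℝ} (hδ : 0 ≤ δ)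
    (h : G.Adj i k) (hp : 0 < offer w α k i) (hb : earn G w α i - δ ≤ offer w α k i) :
    earn G w α i + earn G w α k ≤ w i k + 2 * ε + 2 * δ := by
  have f1 := abs_le.mp (hf _ _ h)
  have n := near hs hα hf hδ h hp hb
  have s := offer_sum_le hs hw hα h
  have e := earn_le (G := G) (w := w) (α := α) (i := k) (j := i)
  rcases max_cases (offer w α i k) (upd G w α k i) with h3 | h3 <;> linarith

/-- strictly best offers have slack in the edge -/
theorem slack (hs : ∀ i j, w i j = w j i)
    (hα : ValidMsg G α) (hf : IsEpsFixedPt G w α ε) {i k : V}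
    (h : G.Adj i k) (hb : upd G w α i k + ε < offer w α k i) :
    α i k + α k i < w i k ∧ offer w α k i - α i k = offer w α i k - α k i := by
  have a := hα _ _ h
  have b := hα _ _ h.symm
  have d := hs k i
  have f1 := abs_le.mp (hf _ _ h)
  rcases lt_or_ge (α i k + α k i) (w i k) with h1 | h1
  · refine ⟨h1, ?_⟩
    rw [offer_lo h1.le b, offer_lo (by rw [d]; linarith) a, d]; ring
  · exfalso
    rw [offer_hi (by rw [d]; linarith), d] at hb
    rcases max_cases (w i k - α k i) 0 with h3 | h3 <;> linarith

theorem recip (hs : ∀ i j, w i j = w j i)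
    (hα : ValidMsg G α) (hf : IsEpsFixedPt G w α ε) {i k : V} {δ : ℝ} (hδ : 0 ≤ δ)
    (h : G.Adj i k) (hb : upd G w α i k + δ + 2 * ε < offer w α k i) :
    upd G w α k i + δ < offer w α i k := by
  have f1 := abs_le.mp (hf _ _ h)
  have f2 := abs_le.mp (hf _ _ h.symm)
  have := slack hs hα hf h (by linarith)
  linarith

theorem margin_rank (hs : ∀ i j, w i j = w j i) (hw : ∀ i j, G.Adj i j → 0 < w i j)
    (hα : ValidMsg G α) (hf : IsEpsFixedPt G w α ε) {M : V → V → Prop} (hM : IsMatching G M)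
    {y : V → ℝ} {h : ℝ} (hh : 0 < h) (hε0 : 0 ≤ ε)
    (hn : 64 * (Fintype.card V : ℝ) * ε ≤ h) (hε : 64 * ε ≤ h)
    (hyu : ∀ i, (∀ j, ¬ M i j) → y i = 0)
    (hyc : ∀ i j, M i j → h / 2 ≤ y i)
    (hyM : ∀ i j, M i j → y i + y j = w i j)
    (hyn : ∀ i j, G.Adj i j → ¬ M i j → w i j + h ≤ y i + y j) :
    ∀ (r : ℕ) (j i : V), M j i → -ε ≤ earn G w α j - y j →
      (Finset.univ.filter fun l => earn G w α j - y j < earn G w α l - y l).card = r →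
      upd G w α j i + (h / 8 - 4 * ε * r) < offer w α i j := by
  intro r
  induction r using Nat.strong_induction_on with
  | _ r ih =>
  intro j i hji hd hr
  by_contra hcon
  push Not at hcon
  have hji' := hM.subset _ _ hji
  have hrn : (r : ℝ) ≤ Fintype.card V := by
    have := Finset.card_filter_le (Finset.univ : Finset V) (fun l => earn G w α j - y j < earn G w α l - y l)
    rw [hr, Finset.card_univ] at this
    exact_mod_cast this
  set δ := h / 8 - 4 * ε * r with hδd
  have hrε : ε * r ≤ h / 64 := by nlinarith
  have hrε0 : 0 ≤ ε * r := by positivity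
  have hδ : 0 ≤ δ := by linarith
  have hδ2 : δ ≤ h / 8 := by linarith
  have e := earn_le (G := G) (w := w) (α := α) (i := j) (j := i)
  have e2 : earn G w α j ≤ upd G w α j i + δ := by
    rcases max_cases (offer w α i j) (upd G w α j i) with h3 | h3 <;> linarith
  have hyj := hyc _ _ hji
  have hup : 0 < upd G w α j i := by linarith
  obtain ⟨k, hjk, hki, hk⟩ := upd_attained hup
  have hoff : 0 < offer w α k j := by linarith
  have n := near hs hα hf hδ hjk hoff (by linarith)
  have t := tight hs hw hα hf hδ hjk hoff (by linarith)
  have hnM : ¬ M j k := fun hc => hki (hM.unique _ _ _ hc hji)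
  have y1 := hyn _ _ hjk hnM
  have ek := earn_nonneg (G := G) w α k
  have : ∃ l, M k l := by
    by_contra hc
    push Not at hc
    have := hyu k hc
    linarith
  obtain ⟨l, hkl⟩ := this
  have hlk := hM.symm _ _ hkl
  have hkl' := hM.subset _ _ hkl
  have hlj : l ≠ j := by
    rintro rfl
    exact hki (hM.unique _ _ _ hlk hji)
  have u1 := le_upd (w := w) (α := α) hjk.symm hlj.symm
  have u2 := le_upd (w := w) (α := α) hkl' hlj
  have lb := earn_lb hs hα hf hkl'
  have y2 := hyM _ _ hkl
  have dl : earn G w α j - y j < earn G w α l - y l := by linarith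
  have hr2 : (Finset.univ.filter fun x => earn G w α l - y l < earn G w α x - y x).card < r := by
    rw [← hr]
    apply Finset.card_lt_card
    rw [Finset.ssubset_iff_of_subset]
    · exact ⟨l, by simpa using dl, by simp⟩
    · intro x hx
      simp only [Finset.mem_filter, Finset.mem_univ, true_and] at hx ⊢
      linarith
  have I := ih _ hr2 l k hlk (by linarith) rfl
  set r' := (Finset.univ.filter fun x => earn G w α l - y l < earn G w α x - y x).card
  have hr3 : (r' : ℝ) + 1 ≤ r := by exact_mod_cast hr2
  have hr4 : ε * r' + ε ≤ ε * r := by nlinarith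
  have R := recip hs hα hf (δ := δ + 2 * ε) (by linarith) hkl'.symm (by linarith)
  linarith

theorem margin (hs : ∀ i j, w i j = w j i) (hw : ∀ i j, G.Adj i j → 0 < w i j)
    (hα : ValidMsg G α) (hf : IsEpsFixedPt G w α ε) {M : V → V → Prop} (hM : IsMatching G M)
    {y : V → ℝ} {h : ℝ} (hh : 0 < h) (hε0 : 0 ≤ ε)
    (hn : 64 * (Fintype.card V : ℝ) * ε ≤ h) (hε : 64 * ε ≤ h)
    (hyu : ∀ i, (∀ j, ¬ M i j) → y i = 0)
    (hyc : ∀ i j, M i j → h / 2 ≤ y i)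
    (hyM : ∀ i j, M i j → y i + y j = w i j)
    (hyn : ∀ i j, G.Adj i j → ¬ M i j → w i j + h ≤ y i + y j) :
    ∀ j i : V, M j i → upd G w α j i + h / 32 < offer w α i j := by
  have main : ∀ j i : V, M j i → -ε ≤ earn G w α j - y j →
      upd G w α j i + h / 16 < offer w α i j := by
    intro j i hji hd
    have := margin_rank hs hw hα hf hM hh hε0 hn hε hyu hyc hyM hyn _ j i hji hd rfl
    set r := (Finset.univ.filter fun l => earn G w α j - y j < earn G w α l - y l).card with hr
    have hrn : (r : ℝ) ≤ Fintype.card V := by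
      have := Finset.card_filter_le (Finset.univ : Finset V) (fun l => earn G w α j - y j < earn G w α l - y l)
      rw [Finset.card_univ] at this
      exact_mod_cast this
    have hrε : ε * r ≤ h / 64 := by nlinarith
    linarith
  intro j i hji
  by_cases hd : -ε ≤ earn G w α j - y j
  · have := main j i hji hd
    linarith
  · have lb := earn_lb hs hα hf (hM.subset _ _ hji)
    have y2 := hyM _ _ hji
    have m := main i j (hM.symm _ _ hji) (by linarith)
    exact recip hs hα hf (by linarith) (hM.subset _ _ hji).symm (by linarith)

theorem core (hs : ∀ i j, w i j = w j i) (hw : ∀ i j, G.Adj i j → 0 < w i j)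
    (hα : ValidMsg G α) (hf : IsEpsFixedPt G w α ε) {M : V → V → Prop} (hM : IsMatching G M)
    {y : V → ℝ} {h : ℝ} (hh : 0 < h) (hε0 : 0 ≤ ε)
    (hn : 64 * (Fintype.card V : ℝ) * ε ≤ h) (hε : 64 * ε ≤ h)
    (hyu : ∀ i, (∀ j, ¬ M i j) → y i = 0)
    (hyc : ∀ i j, M i j → h / 2 ≤ y i)
    (hyM : ∀ i j, M i j → y i + y j = w i j)
    (hyn : ∀ i j, G.Adj i j → ¬ M i j → w i j + h ≤ y i + y j) :
    Induces G (offer w α) M ∧ IsEpsNB G w M (earn G w α) (4 * ε) := by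
  have mg := margin hs hw hα hf hM hh hε0 hn hε hyu hyc hyM hyn
  have hun : ∀ i, (∀ j, ¬ M i j) → earn G w α i = 0 := by
    intro i hi
    by_contra hne
    have hpos : 0 < earn G w α i := lt_of_le_of_ne (earn_nonneg w α i) (Ne.symm hne)
    obtain ⟨k, hik, hk⟩ := earn_attained hpos
    have n := near hs hα hf le_rfl hik (by linarith) (by linarith)
    have t := tight hs hw hα hf le_rfl hik (by linarith) (by linarith)
    have y1 := hyn _ _ hik (hi k)
    have y0 := hyu i hi
    have ek := earn_nonneg (G := G) w α k
    have : ∃ l, M k l := by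
      by_contra hc
      push Not at hc
      have := hyu k hc
      linarith
    obtain ⟨l, hkl⟩ := this
    have hli : l ≠ i := by rintro rfl; exact hi _ (hM.symm _ _ hkl)
    have u1 := le_upd (w := w) (α := α) hik.symm hli.symm
    have u2 := le_upd (w := w) (α := α) (hM.subset _ _ hkl) hli
    have := mg k l hkl
    linarith
  have hbest : ∀ i j, M i j → earn G w α i = offer w α j i := by
    intro i j hij
    have m := mg i j hij
    have e := earn_le (G := G) (w := w) (α := α) (i := i) (j := j)
    rw [max_eq_left (by linarith)] at e
    exact le_antisymm e (le_earn (hM.subset _ _ hij))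
  have hcov : ∀ i j, M i j → h / 32 < earn G w α i := by
    intro i j hij
    have m := mg i j hij
    rw [hbest i j hij]
    linarith [upd_nonneg (G := G) w α i j]
  have hslack : ∀ i j, M i j → α i j + α j i < w i j ∧ offer w α j i - α i j = offer w α i j - α j i := by
    intro i j hij
    exact slack hs hα hf (hM.subset _ _ hij) (by linarith [mg i j hij])
  -- offers along unmatched edges
  have hoff : ∀ i j k, M i j → G.Adj i k → k ≠ j → offer w α k i + h / 32 < earn G w α i ∧
      w i k < α i k + α k i := by
    intro i j k hij hik hkj
    have m := mg i j hij
    have u := le_upd (w := w) (α := α) hik hkj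
    rw [hbest i j hij]
    refine ⟨by linarith, ?_⟩
    by_contra hc
    push Not at hc
    have f1 := abs_le.mp (hf _ _ hik)
    have u3 := le_upd (w := w) (α := α) (hM.subset _ _ hij) (Ne.symm hkj)
    have d := hs k i
    have o := offer_lo (w := w) (α := α) (i := k) (j := i) (by linarith) (hα _ _ hik)
    linarith
  have hearn_upd : ∀ i k, G.Adj i k → ¬ M i k → earn G w α i = upd G w α i k := by
    intro i k hik hnM
    by_cases hc : ∃ j, M i j
    · obtain ⟨j, hj⟩ := hc
      have hjk : j ≠ k := by rintro rfl; exact hnM hj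
      refine le_antisymm ?_ (upd_le_earn w α i k)
      rw [hbest i j hj]
      exact le_upd (hM.subset _ _ hj) hjk
    · push Not at hc
      have := hun i hc
      have a := upd_le_earn (G := G) w α i k
      have b := upd_nonneg (G := G) w α i k
      linarith
  refine ⟨⟨hM, ?_, ?_⟩, ⟨hM, earn_nonneg w α, ?_, hun⟩, ?_, ?_⟩
  · rintro i ⟨k, hik, hk⟩
    have e := le_earn (w := w) (α := α) hik
    by_cases hc : ∃ j, M i j
    · obtain ⟨j, hj⟩ := hc
      refine ⟨j, hj, fun l hl hlj => ?_⟩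
      have := hoff i j l hj hl hlj
      rw [← hbest i j hj]; linarith
    · push Not at hc
      have := hun i hc
      linarith
  · intro i hi j hj
    have := hcov i j hj
    unfold earn at this
    linarith
  · intro i j hij
    rw [hbest i j hij, hbest j i (hM.symm _ _ hij), add_comm]
    exact offer_sum_eq hs hα (hM.subset _ _ hij) (hslack i j hij).1.le
  · intro i j hij hnM
    have hnM' : ¬ M j i := fun hc => hnM (hM.symm _ _ hc)
    have key : ∀ i j, G.Adj i j → ¬ M i j → (∃ k, M i k) → w i j ≤ earn G w α i + earn G w α j := by
      rintro i j hij hnM ⟨k, hk⟩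
      have o := hoff i k j hk hij (by rintro rfl; exact hnM hk)
      have d := hs j i
      have f2 := abs_le.mp (hf _ _ hij.symm)
      have u := upd_le_earn (G := G) w α j i
      rw [offer_hi (by linarith), d] at o
      have := le_max_left (w i j - α j i) 0
      linarith [o.1]
    by_cases hi : ∃ k, M i k
    · exact key i j hij hnM hi
    · by_cases hj : ∃ k, M j k
      · rw [hs i j, add_comm]; exact key j i hij.symm hnM' hj
      · push Not at hi hj
        have := hyn i j hij hnM
        have := hyu i hi
        have := hyu j hj
        have := hw i j hij
        linarith
  · have alt : ∀ i j, M i j → |α i j - bestAlt G w (earn G w α) i j| ≤ 2 * ε := by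
      intro i j hij
      have f1 := hf _ _ (hM.subset _ _ hij)
      have : |upd G w α i j - bestAlt G w (earn G w α) i j| ≤ ε := by
        apply fmax_lip hε0 (upd_notin G i j)
        intro k hk
        simp at hk
        have o := hoff i j k hij hk.2 hk.1
        have hnM : ¬ M k i := fun hc => hk.1 (hM.unique _ _ _ (hM.symm _ _ hc) hij)
        have d := hs k i
        rw [offer_hi (by linarith [o.2]), d]
        unfold pos
        have f2 := hf _ _ hk.2.symm
        rw [← hearn_upd k i hk.2.symm hnM] at f2
        refine (abs_max_sub_max_le_max _ _ _ _).trans (max_le ?_ (by simpa using hε0))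
        rw [abs_le] at f2 ⊢
        constructor <;> linarith
      rw [abs_le] at *
      constructor <;> linarith
    intro i j hij
    have hji := hM.symm _ _ hij
    have a1 := abs_le.mp (alt i j hij)
    have a2 := abs_le.mp (alt j i hji)
    have s := (hslack i j hij).2
    rw [hbest i j hij, hbest j i hji, abs_le]
    constructor <;> linarith
end core

/-! ### assignment duality -/
section assign
variable {ι : Type*} [Fintype ι] [Nonempty ι]

noncomputable def rowP (A : ι → ι → ℝ) (q : ι → ℝ) (u : ι) : ℝ :=
  Finset.univ.sup' Finset.univ_nonempty (fun v => A u v - q v)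

noncomputable def dualF (A : ι → ι → ℝ) (q : ι → ℝ) : ℝ := ∑ u, rowP A q u + ∑ v, q v

theorem le_rowP (A : ι → ι → ℝ) (q : ι → ℝ) (u v : ι) : A u v - q v ≤ rowP A q u :=
  Finset.le_sup' (fun v => A u v - q v) (Finset.mem_univ v)

theorem rowP_le {A : ι → ι → ℝ} {q : ι → ℝ} {u : ι} {c : ℝ} (h : ∀ v, A u v - q v ≤ c) :
    rowP A q u ≤ c := Finset.sup'_le _ _ (fun v _ => h v)

theorem rowP_attained (A : ι → ι → ℝ) (q : ι → ℝ) (u : ι) : ∃ v, A u v - q v = rowP A q u := by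
  obtain ⟨v, _, hv⟩ := Finset.exists_mem_eq_sup' Finset.univ_nonempty (fun v => A u v - q v)
  exact ⟨v, hv.symm⟩

theorem dualF_cont (A : ι → ι → ℝ) : Continuous (dualF A) := by
  unfold dualF rowP
  refine Continuous.add (continuous_finsetSum _ fun u _ => ?_) (by fun_prop)
  exact Continuous.finset_sup'_apply _ (fun v _ => by fun_prop)

theorem dualF_shift (A : ι → ι → ℝ) (q : ι → ℝ) (c : ℝ) :
    dualF A (fun v => q v - c) = dualF A q := by
  have h : ∀ u, rowP A (fun v => q v - c) u = rowP A q u + c := by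
    intro u
    apply le_antisymm
    · apply rowP_le; intro v; linarith [le_rowP A q u v]
    · obtain ⟨v, hv⟩ := rowP_attained A q u
      have := le_rowP A (fun v => q v - c) u v
      linarith
  unfold dualF
  simp only [h, Finset.sum_add_distrib, Finset.sum_sub_distrib]
  ring

theorem dualF_min (A : ι → ι → ℝ) : ∃ q, ∀ q', dualF A q ≤ dualF A q' := by
  set B : ℝ := ∑ u, ∑ v, |A u v| with hB
  have hBA : ∀ v, ∑ u, |A u v| ≤ B := by
    intro v
    exact Finset.sum_le_sum fun u _ =>
      Finset.single_le_sum (f := fun v => |A u v|) (fun _ _ => abs_nonneg _) (Finset.mem_univ v)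
  have hB0 : 0 ≤ B := by positivity
  have hcomp : IsCompact (Set.Icc (0 : ι → ℝ) (fun _ => 2 * B)) := isCompact_Icc
  obtain ⟨q, hq, hmin⟩ := hcomp.exists_isMinOn
    ⟨0, by simp only [Set.mem_Icc, le_refl, true_and]; intro i; simp; positivity⟩ (dualF_cont A).continuousOn
  refine ⟨q, fun q' => ?_⟩
  obtain ⟨v0, -, hv0⟩ := Finset.exists_min_image Finset.univ q' Finset.univ_nonempty
  rw [← dualF_shift A q' (q' v0)]
  set r : ι → ℝ := fun v => q' v - q' v0 with hr
  have hr0 : ∀ v, 0 ≤ r v := fun v => by simp [hr, hv0 v (Finset.mem_univ v)]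
  have hrv0 : r v0 = 0 := by simp [hr]
  by_cases hbox : ∀ v, r v ≤ 2 * B
  · exact hmin ⟨hr0, hbox⟩
  · push Not at hbox
    obtain ⟨v1, hv1⟩ := hbox
    have h0 : dualF A q ≤ dualF A 0 :=
      hmin ⟨le_rfl, fun i => by simp; positivity⟩
    have h1 : dualF A 0 ≤ B := by
      unfold dualF
      simp only [Pi.zero_apply, Finset.sum_const_zero, add_zero]
      refine Finset.sum_le_sum fun u _ => ?_
      apply rowP_le
      intro v
      simp only [Pi.zero_apply, sub_zero]
      exact (le_abs_self _).trans (Finset.single_le_sum (f := fun v => |A u v|)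
        (fun _ _ => abs_nonneg _) (Finset.mem_univ v))
    have h2 : -B ≤ ∑ u, rowP A r u := by
      calc -B ≤ ∑ u, -|A u v0| := by rw [Finset.sum_neg_distrib]; linarith [hBA v0]
        _ ≤ _ := Finset.sum_le_sum fun u _ => by
          have := le_rowP A r u v0
          rw [hrv0] at this
          linarith [neg_abs_le (A u v0)]
    have h3 : r v1 ≤ ∑ v, r v :=
      Finset.single_le_sum (f := r) (fun v _ => hr0 v) (Finset.mem_univ v1)
    have : dualF A r = ∑ u, rowP A r u + ∑ v, r v := rfl
    linarith

theorem assign_dual [DecidableEq ι] (A : ι → ι → ℝ) (σ : Equiv.Perm ι)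
    (hσ : ∀ π : Equiv.Perm ι, ∑ u, A u (π u) ≤ ∑ u, A u (σ u)) :
    ∃ p q : ι → ℝ, (∀ u v, A u v ≤ p u + q v) ∧ ∀ u, A u (σ u) = p u + q (σ u) := by
  obtain ⟨q, hq⟩ := dualF_min A
  set N : ι → Finset ι := fun u => Finset.univ.filter fun v => A u v - q v = rowP A q u with hN
  have hall : ∀ s : Finset ι, s.card ≤ (s.biUnion N).card := by
    intro s
    by_contra hlt
    push Not at hlt
    set T := s.biUnion N with hT
    -- slack
    have hslack : ∃ θ : ℝ, 0 < θ ∧ ∀ u ∈ s, ∀ v, v ∉ T → A u v - q v + θ ≤ rowP A q u := by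
      set P := (s ×ˢ Tᶜ) with hP
      have hpos : ∀ x ∈ P, 0 < rowP A q x.1 - (A x.1 x.2 - q x.2) := by
        rintro ⟨u, v⟩ hx
        simp only [hP, Finset.mem_product, Finset.mem_compl] at hx
        have hne : A u v - q v ≠ rowP A q u := by
          intro he
          apply hx.2
          rw [hT, Finset.mem_biUnion]
          exact ⟨u, hx.1, by simp [hN, he]⟩
        have := lt_of_le_of_ne (le_rowP A q u v) hne
        simp only; linarith
      rcases P.eq_empty_or_nonempty with he | hne
      · refine ⟨1, one_pos, fun u hu v hv => ?_⟩
        have : (u, v) ∈ P := by simp [hP, hu, hv]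
        rw [he] at this
        simp at this
      · obtain ⟨x, hx, hm⟩ := P.exists_min_image (fun x => rowP A q x.1 - (A x.1 x.2 - q x.2)) hne
        refine ⟨_, hpos x hx, fun u hu v hv => ?_⟩
        have := hm (u, v) (by simp [hP, hu, hv])
        simp only at this
        linarith
    obtain ⟨θ, hθ, hsl⟩ := hslack
    set q' : ι → ℝ := fun v => q v + if v ∈ T then θ else 0 with hq'
    have hp' : ∀ u, rowP A q' u ≤ rowP A q u - if u ∈ s then θ else 0 := by
      intro u
      apply rowP_le
      intro v
      have h1 := le_rowP A q u v
      simp only [hq']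
      by_cases hu : u ∈ s
      · by_cases hv : v ∈ T
        · simp only [hu, hv, if_true]; linarith
        · have := hsl u hu v hv
          simp only [hu, hv, if_true, if_false]; linarith
      · simp only [hu, if_false]
        split_ifs <;> linarith
    have h1 := hq q'
    have h2 : ∑ u, rowP A q' u ≤ ∑ u, rowP A q u - s.card * θ := by
      calc _ ≤ ∑ u, (rowP A q u - if u ∈ s then θ else 0) := Finset.sum_le_sum fun u _ => hp' u
        _ = _ := by rw [Finset.sum_sub_distrib]; simp
    have h3 : ∑ v, q' v = ∑ v, q v + T.card * θ := by
      simp only [hq']; rw [Finset.sum_add_distrib]; simp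
    have h4 : (T.card : ℝ) < s.card := by exact_mod_cast hlt
    unfold dualF at h1
    rw [h3] at h1
    nlinarith
  obtain ⟨f, hf, hfN⟩ := (Finset.all_card_le_biUnion_card_iff_exists_injective N).mp hall
  set π : Equiv.Perm ι := Equiv.ofBijective f (Finite.injective_iff_bijective.mp hf) with hπ
  have hπN : ∀ u, A u (π u) = rowP A q u + q (π u) := by
    intro u
    have := hfN u
    simp only [hN, Finset.mem_filter, Finset.mem_univ, true_and] at this
    have e : π u = f u := rfl
    rw [e]; linarith
  have hle : ∀ u v, A u v ≤ rowP A q u + q v := fun u v => by linarith [le_rowP A q u v]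
  refine ⟨rowP A q, q, hle, ?_⟩
  have s1 : ∑ u, A u (π u) = ∑ u, rowP A q u + ∑ u, q u := by
    rw [Finset.sum_congr rfl (fun u _ => hπN u), Finset.sum_add_distrib, Equiv.sum_comp π q]
  have s2 : ∑ u, (rowP A q u + q (σ u)) = ∑ u, rowP A q u + ∑ u, q u := by
    rw [Finset.sum_add_distrib, Equiv.sum_comp σ q]
  have s3 : ∑ u, A u (σ u) = ∑ u, (rowP A q u + q (σ u)) := by
    apply le_antisymm (Finset.sum_le_sum fun u _ => hle u (σ u))
    rw [s2, ← s1]; exact hσ π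
  intro u
  exact (Finset.sum_eq_sum_iff_of_le (fun u _ => hle u (σ u))).mp s3 u (Finset.mem_univ u)
end assign

/-! ### isolation lemma -/
section isol
open MeasureTheory
variable {ι : Type*} [Fintype ι] [DecidableEq ι]

theorem pi_slice {η g : ℝ} (hη : 0 < η) (e : ι) (D : (ι → ℝ) → ℝ) (hD : Measurable D)
    (hup : ∀ ω x, D (Function.update ω e x) = D ω) :
    (Measure.pi fun _ : ι => volume.restrict (Set.Icc (0 : ℝ) 1)) {ω | |D ω - η * ω e| < g} ≤
      ENNReal.ofReal (2 * g / η) := by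
  haveI : ∀ _ : ι, IsProbabilityMeasure (volume.restrict (Set.Icc (0 : ℝ) 1)) :=
    fun _ => ⟨by simp⟩
  have hm : MeasurableSet {ω : ι → ℝ | |D ω - η * ω e| < g} := by
    apply measurableSet_lt _ measurable_const
    have : Measurable fun ω : ι → ℝ => D ω - η * ω e := hD.sub (by fun_prop)
    exact measurable_norm.comp this
  rw [← lintegral_indicator_one hm, lintegral_eq_lmarginal_univ (fun _ => 0),
    lmarginal_erase' _ (measurable_one.indicator hm) (Finset.mem_univ e)]
  have hin : (fun x : ι → ℝ => ∫⁻ xᵢ, ({ω : ι → ℝ | |D ω - η * ω e| < g}.indicator 1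
      (Function.update x e xᵢ) : ENNReal) ∂(volume.restrict (Set.Icc (0 : ℝ) 1))) ≤
      fun _ => ENNReal.ofReal (2 * g / η) := by
    intro x
    have h1 : ∀ y : ℝ, ({ω : ι → ℝ | |D ω - η * ω e| < g}.indicator 1
      (Function.update x e y) : ENNReal) =
        (Set.Ioo ((D x - g) / η) ((D x + g) / η)).indicator 1 y := by
      intro y
      have : Function.update x e y ∈ {ω : ι → ℝ | |D ω - η * ω e| < g} ↔
          y ∈ Set.Ioo ((D x - g) / η) ((D x + g) / η) := by
        simp only [Set.mem_ofPred_eq, hup, Function.update_self, Set.mem_Ioo, abs_lt]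
        rw [div_lt_iff₀ hη, lt_div_iff₀ hη]
        constructor <;> rintro ⟨a, b⟩ <;> constructor <;> linarith
      by_cases h : y ∈ Set.Ioo ((D x - g) / η) ((D x + g) / η)
      · rw [Set.indicator_of_mem h, Set.indicator_of_mem (this.mpr h)]; rfl
      · rw [Set.indicator_of_notMem h, Set.indicator_of_notMem (fun hc => h (this.mp hc))]
    simp only [h1]
    rw [lintegral_indicator_one measurableSet_Ioo]
    refine (Measure.restrict_apply_le _ _).trans ?_
    rw [Real.volume_Ioo]
    apply ENNReal.ofReal_le_ofReal
    apply le_of_eq; ring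
  refine (lmarginal_mono hin _).trans ?_
  simp only [lmarginal, lintegral_const]
  rw [Measure.pi_univ]
  simp

def wt (a : ι → ℝ) (η : ℝ) (ω : ι → ℝ) (S : Finset ι) : ℝ := ∑ e ∈ S, (a e + η * ω e)

theorem wt_erase (a : ι → ℝ) (η : ℝ) (ω : ι → ℝ) {S : Finset ι} {e : ι} (h : e ∈ S) :
    wt a η ω S = wt a η ω (S.erase e) + a e + η * ω e := by
  unfold wt
  rw [← Finset.sum_erase_add _ _ h]; ring

theorem wt_update (a : ι → ℝ) (η : ℝ) (ω : ι → ℝ) {S : Finset ι} {e : ι} (h : e ∉ S) (x : ℝ) :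
    wt a η (Function.update ω e x) S = wt a η ω S := by
  unfold wt
  refine Finset.sum_congr rfl fun f hf => ?_
  rw [Function.update_of_ne (by rintro rfl; exact h hf)]

theorem isolation (F : Finset (Finset ι)) (h1 : ∀ e, ∃ S ∈ F, e ∈ S) (h2 : ∀ e, ∃ S ∈ F, e ∉ S)
    (h3 : F.Nonempty) (a : ι → ℝ) {η g : ℝ} (hη : 0 < η) (hg : 0 ≤ g) :
    ∃ bad : Set (ι → ℝ),
      (Measure.pi fun _ : ι => volume.restrict (Set.Icc (0 : ℝ) 1)) bad ≤
        ENNReal.ofReal (Fintype.card ι * (2 * g / η)) ∧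
      ∀ ω, ω ∉ bad → ∃ S ∈ F, ∀ S' ∈ F, S' ≠ S → wt a η ω S' + g ≤ wt a η ω S := by
  have n1 : ∀ e, (F.filter fun S => e ∈ S).Nonempty := fun e => by
    obtain ⟨S, hS, he⟩ := h1 e
    exact ⟨S, by simp [hS, he]⟩
  have n2 : ∀ e, (F.filter fun S => e ∉ S).Nonempty := fun e => by
    obtain ⟨S, hS, he⟩ := h2 e
    exact ⟨S, by simp [hS, he]⟩
  set D : ι → (ι → ℝ) → ℝ := fun e ω =>
    (F.filter fun S => e ∉ S).sup' (n2 e) (fun S => wt a η ω (S.erase e)) -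
    (F.filter fun S => e ∈ S).sup' (n1 e) (fun S => wt a η ω (S.erase e) + a e) with hD
  have hDup : ∀ e ω x, D e (Function.update ω e x) = D e ω := by
    intro e ω x
    simp only [hD]
    have : ∀ S : Finset ι, wt a η (Function.update ω e x) (S.erase e) = wt a η ω (S.erase e) :=
      fun S => wt_update a η ω (by simp) x
    simp only [this]
  have hDm : ∀ e, Measurable (D e) := by
    intro e
    apply Continuous.measurable
    simp only [hD, wt]
    apply Continuous.sub <;>
    · apply Continuous.finset_sup'_apply
      intro S _
      fun_prop
  refine ⟨⋃ e, {ω | |D e ω - η * ω e| < g}, ?_, ?_⟩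
  · refine (measure_iUnion_fintype_le _ _).trans ?_
    refine (Finset.sum_le_sum fun e _ => pi_slice hη e (D e) (hDm e) (hDup e)).trans ?_
    rw [Finset.sum_const, Finset.card_univ, nsmul_eq_mul, ENNReal.ofReal_mul (by positivity)]
    simp
  · intro ω hω
    simp only [Set.mem_iUnion, Set.mem_ofPred_eq, not_exists, not_lt] at hω
    obtain ⟨S, hS, hmax⟩ := F.exists_max_image (wt a η ω) h3
    refine ⟨S, hS, fun S' hS' hne => ?_⟩
    have hm := hmax S' hS'
    have hex : ∃ e, ¬ (e ∈ S' ↔ e ∈ S) := by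
      by_contra hc
      push Not at hc
      exact hne (Finset.ext hc)
    obtain ⟨e, he⟩ := hex
    have hb := hω e
    -- attained
    obtain ⟨A, hA, hAe⟩ := Finset.exists_mem_eq_sup' (n2 e) (fun S => wt a η ω (S.erase e))
    obtain ⟨B, hB, hBe⟩ := Finset.exists_mem_eq_sup' (n1 e) (fun S => wt a η ω (S.erase e) + a e)
    have hDe : D e ω = wt a η ω (A.erase e) - (wt a η ω (B.erase e) + a e) := by
      simp only [hD]; rw [hAe, hBe]
    simp only [Finset.mem_filter] at hA hB
    have hAw : wt a η ω (A.erase e) = wt a η ω A := by rw [Finset.erase_eq_of_notMem hA.2]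
    have hBw := wt_erase a η ω hB.2
    have mA := hmax A hA.1
    have mB := hmax B hB.1
    have hDe2 : D e ω - η * ω e = wt a η ω A - wt a η ω B := by rw [hDe, hAw, hBw]; ring
    rw [hDe2] at hb
    by_cases heS : e ∈ S
    · have heS' : e ∉ S' := fun hc => he ⟨fun _ => heS, fun _ => hc⟩
      have i1 : wt a η ω (S'.erase e) ≤ _ := Finset.le_sup' (fun S => wt a η ω (S.erase e))
        (show S' ∈ F.filter (fun S => e ∉ S) by simp [hS', heS'])
      have i2 : wt a η ω (S.erase e) + a e ≤ _ := Finset.le_sup' (fun S => wt a η ω (S.erase e) + a e)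
        (show S ∈ F.filter (fun S => e ∈ S) by simp [hS, heS])
      rw [hAe, hAw, Finset.erase_eq_of_notMem heS'] at i1
      rw [hBe] at i2
      have := wt_erase a η ω heS
      rcases abs_cases (wt a η ω A - wt a η ω B) with h | h <;> linarith
    · have heS' : e ∈ S' := by by_contra hc; exact he ⟨fun h => absurd h hc, fun h => absurd h heS⟩
      have i1 : wt a η ω (S.erase e) ≤ _ := Finset.le_sup' (fun S => wt a η ω (S.erase e))
        (show S ∈ F.filter (fun S => e ∉ S) by simp [hS, heS])
      have i2 : wt a η ω (S'.erase e) + a e ≤ _ := Finset.le_sup' (fun S => wt a η ω (S.erase e) + a e)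
        (show S' ∈ F.filter (fun S => e ∈ S) by simp [hS', heS'])
      rw [hAe, hAw, Finset.erase_eq_of_notMem heS] at i1
      rw [hBe] at i2
      have := wt_erase a η ω heS'
      rcases abs_cases (wt a η ω A - wt a η ω B) with h | h <;> linarith
end isol

/-! ### strict dual from the gap -/
section dual
variable (G : SimpleGraph V) [DecidableRel G.Adj]

abbrev Ed := {e : Sym2 V // e ∈ G.edgeFinset}

def mkE {i j : V} (h : G.Adj i j) : Ed G :=
  ⟨s(i, j), SimpleGraph.mem_edgeFinset.mpr ((SimpleGraph.mem_edgeSet G).mpr h)⟩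

def IsM (S : Finset (Ed G)) : Prop := ∀ v, ∀ e ∈ S, ∀ f ∈ S, v ∈ e.1 → v ∈ f.1 → e = f

def relM (S : Finset (Ed G)) (i j : V) : Prop := ∃ h : G.Adj i j, mkE G h ∈ S

variable {G}

theorem relM_matching {S : Finset (Ed G)} (hS : IsM G S) : IsMatching G (relM G S) := by
  refine ⟨fun i j h => h.1, ?_, ?_⟩
  · rintro i j ⟨h, hm⟩
    refine ⟨h.symm, ?_⟩
    have : mkE G h.symm = mkE G h := Subtype.ext Sym2.eq_swap
    rwa [this]
  · rintro i j k ⟨h, hm⟩ ⟨h', hm'⟩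
    have := hS i _ hm _ hm' (by simp [mkE]) (by simp [mkE])
    have h2 := congrArg Subtype.val this
    simp only [mkE] at h2
    exact Sym2.congr_right.mp h2

open Classical in
def colS (G : SimpleGraph V) [DecidableRel G.Adj] (c : V → Bool) (π : Equiv.Perm V) (b : Bool) :
    Finset (Ed G) :=
  Finset.univ.filter fun e => ∃ u, c u = b ∧ G.Adj u (π u) ∧ e.1 = s(u, π u)

theorem colS_IsM {c : V → Bool} (hc : ∀ i j, G.Adj i j → c i ≠ c j) (π : Equiv.Perm V) (b : Bool) :
    IsM G (colS G c π b) := by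
  intro v e he f hf hve hvf
  simp only [colS, Finset.mem_filter, Finset.mem_univ, true_and] at he hf
  obtain ⟨u, hu, ha, hue⟩ := he
  obtain ⟨u', hu', ha', hue'⟩ := hf
  have k : u = u' := by
    rw [hue, Sym2.mem_iff] at hve
    rw [hue', Sym2.mem_iff] at hvf
    have q1 := hc _ _ ha
    have q2 := hc _ _ ha'
    rcases hve with h | h <;> rcases hvf with h' | h'
    · rw [← h, ← h']
    · rw [← h', h, hu', hu] at q2; exact absurd rfl q2
    · rw [← h, h', hu', hu] at q1; exact absurd rfl q1
    · exact π.injective (h ▸ h')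
  apply Subtype.ext
  rw [hue, hue', k]

theorem colS_sum {c : V → Bool} (hc : ∀ i j, G.Adj i j → c i ≠ c j) (π : Equiv.Perm V) (b : Bool)
    {W : V → V → ℝ} {val : Ed G → ℝ} (hval : ∀ i j (h : G.Adj i j), val (mkE G h) = W i j) :
    ∑ u ∈ Finset.univ.filter (fun u => c u = b), (if G.Adj u (π u) then W u (π u) else 0) =
      ∑ e ∈ colS G c π b, val e := by
  rw [← Finset.sum_filter, Finset.filter_filter]
  refine Finset.sum_bij (fun u hu => mkE G (Finset.mem_filter.mp hu).2.2) ?_ ?_ ?_ ?_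
  · intro u hu
    simp only [Finset.mem_filter, Finset.mem_univ, true_and] at hu
    simp only [colS, Finset.mem_filter, Finset.mem_univ, true_and]
    exact ⟨u, hu.1, hu.2, rfl⟩
  · intro u hu u' hu' he
    simp only [Finset.mem_filter, Finset.mem_univ, true_and] at hu hu'
    have h2 := congrArg Subtype.val he
    simp only [mkE] at h2
    rw [Sym2.eq_iff] at h2
    rcases h2 with h | h
    · exact h.1
    · have := hc _ _ hu.2
      rw [h.2, hu.1, hu'.1] at this
      exact absurd rfl this
  · intro e he
    simp only [colS, Finset.mem_filter, Finset.mem_univ, true_and] at he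
    obtain ⟨u, hu, ha, hue⟩ := he
    exact ⟨u, by simp [hu, ha], Subtype.ext hue.symm⟩
  · intro u hu
    exact (hval _ _ _).symm

open Classical in
noncomputable def bon (G : SimpleGraph V) [DecidableRel G.Adj] (S : Finset (Ed G)) (u v : V) : ℝ :=
  if u = v then (if ∃ j, relM G S u j then 1 else 0)
  else if G.Adj u v then (if relM G S u v then 0 else 1) else 0

theorem bon_le (S : Finset (Ed G)) (u v : V) : bon G S u v ≤ 1 := by
  unfold bon; split_ifs <;> norm_num

noncomputable def Amat (G : SimpleGraph V) [DecidableRel G.Adj] (S : Finset (Ed G)) (W : V → V → ℝ)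
    (g : ℝ) (u v : V) : ℝ := (if G.Adj u v then W u v else 0) + g * bon G S u v

theorem Amat_sum {c : V → Bool} (hc : ∀ i j, G.Adj i j → c i ≠ c j) (π : Equiv.Perm V)
    {W : V → V → ℝ} {val : Ed G → ℝ} (hval : ∀ i j (h : G.Adj i j), val (mkE G h) = W i j)
    (S : Finset (Ed G)) (g : ℝ) :
    ∑ u, Amat G S W g u (π u) = ∑ e ∈ colS G c π true, val e + ∑ e ∈ colS G c π false, val e
      + g * ∑ u, bon G S u (π u) := by
  unfold Amat
  rw [Finset.sum_add_distrib, ← Finset.mul_sum, ← colS_sum hc π true hval,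
    ← colS_sum hc π false hval]
  congr 1
  rw [← Finset.sum_filter_add_sum_filter_not Finset.univ (fun u => c u = true)]
  congr 1
  apply Finset.sum_congr _ (fun _ _ => rfl)
  ext u; simp

theorem bon_zero {c : V → Bool} (hc : ∀ i j, G.Adj i j → c i ≠ c j) (π : Equiv.Perm V)
    {S : Finset (Ed G)} (h : ∀ b, colS G c π b = S) (u : V) : bon G S u (π u) = 0 := by
  unfold bon
  split_ifs with h1 h2 h3 h4
  · exfalso
    obtain ⟨j, ha, hm⟩ := h2
    rw [← h (c u)] at hm
    simp only [colS, Finset.mem_filter, Finset.mem_univ, true_and] at hm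
    obtain ⟨v, hv, hav, he⟩ := hm
    simp only [mkE] at he
    rw [Sym2.eq_iff] at he
    rcases he with ⟨rfl, he⟩ | ⟨_, he⟩
    · rw [← h1] at hav; exact G.loopless.irrefl _ hav
    · rw [← he] at hv; exact hc _ _ ha hv.symm
  · rfl
  · rfl
  · exfalso
    apply h4
    refine ⟨h3, ?_⟩
    rw [← h (c u)]
    simp only [colS, Finset.mem_filter, Finset.mem_univ, true_and]
    exact ⟨u, rfl, h3, rfl⟩
  · rfl

open Classical in
theorem exists_partner {M : V → V → Prop} (hM : IsMatching G M) :
    ∃ σ : Equiv.Perm V, (∀ i j, M i j → σ i = j) ∧ ∀ i, (∀ j, ¬ M i j) → σ i = i := by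
  let f : V → V := fun i => if h : ∃ j, M i j then h.choose else i
  have f1 : ∀ i j, M i j → f i = j := by
    intro i j h
    have hx : ∃ j, M i j := ⟨j, h⟩
    simp only [f, dif_pos hx]
    exact hM.unique _ _ _ hx.choose_spec h
  have f2 : ∀ i, (∀ j, ¬ M i j) → f i = i := by
    intro i h
    have hx : ¬ ∃ j, M i j := fun ⟨j, hj⟩ => h j hj
    simp only [f, dif_neg hx]
  have hf : Function.Involutive f := by
    intro i
    by_cases h : ∃ j, M i j
    · obtain ⟨j, hj⟩ := h
      rw [f1 _ _ hj, f1 _ _ (hM.symm _ _ hj)]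
    · have := f2 i (fun j hj => h ⟨j, hj⟩)
      rw [this, this]
  exact ⟨hf.toPerm, f1, f2⟩

theorem dual_of_gap [Nonempty V] {c : V → Bool} (hc : ∀ i j, G.Adj i j → c i ≠ c j)
    {W : V → V → ℝ} (hW : ∀ i j, W i j = W j i)
    {val : Ed G → ℝ} (hval : ∀ i j (h : G.Adj i j), val (mkE G h) = W i j)
    {S : Finset (Ed G)} (hS : IsM G S) {g : ℝ} (hg : 0 < g)
    (gap : ∀ S', IsM G S' → S' ≠ S → ∑ e ∈ S', val e + Fintype.card V * g ≤ ∑ e ∈ S, val e) :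
    ∃ y : V → ℝ, (∀ i, (∀ j, ¬ relM G S i j) → y i = 0) ∧ (∀ i j, relM G S i j → g / 2 ≤ y i) ∧
      (∀ i j, relM G S i j → y i + y j = W i j) ∧
      ∀ i j, G.Adj i j → ¬ relM G S i j → W i j + g ≤ y i + y j := by
  have hM := relM_matching hS
  obtain ⟨σ, s1, s2⟩ := exists_partner hM
  have hσS : ∀ b, colS G c σ b = S := by
    intro b
    ext e
    simp only [colS, Finset.mem_filter, Finset.mem_univ, true_and]
    constructor
    · rintro ⟨u, hu, ha, he⟩
      by_cases h : ∃ j, relM G S u j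
      · obtain ⟨j, hj⟩ := h
        have := s1 _ _ hj
        obtain ⟨h1, h2⟩ := hj
        have : e = mkE G h1 := Subtype.ext (by rw [he, this]; rfl)
        rwa [this]
      · rw [s2 u (fun j hj => h ⟨j, hj⟩)] at ha
        exact absurd ha (G.loopless.irrefl _)
    · intro he
      obtain ⟨e, hE⟩ := e
      induction e using Sym2.ind with
      | _ i j =>
        have ha : G.Adj i j := by simpa using hE
        have hm : relM G S i j := ⟨ha, he⟩
        have hm' := hM.symm _ _ hm
        have e1 := s1 _ _ hm
        have e2 := s1 _ _ hm'
        by_cases hb : c i = b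
        · exact ⟨i, hb, by rw [e1]; exact ha, by rw [e1]⟩
        · refine ⟨j, ?_, by rw [e2]; exact ha.symm, by rw [e2]; exact Sym2.eq_swap⟩
          have := hc _ _ ha
          cases h1 : c i <;> cases h2 : c j <;> cases b <;> simp_all
  have hmaxS : ∀ S', IsM G S' → ∑ e ∈ S', val e ≤ ∑ e ∈ S, val e := by
    intro S' hS'
    by_cases h : S' = S
    · rw [h]
    · have := gap S' hS' h
      have : 0 ≤ Fintype.card V * g := by positivity
      linarith
  have hσv : ∑ u, Amat G S W g u (σ u) = 2 * ∑ e ∈ S, val e := by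
    rw [Amat_sum hc σ hval, hσS, hσS, Finset.sum_eq_zero (fun u _ => bon_zero hc σ hσS u)]
    ring
  obtain ⟨p, q, hpq, hs⟩ := assign_dual (Amat G S W g) σ (by
    intro π
    rw [hσv, Amat_sum hc π hval]
    by_cases h : ∀ b, colS G c π b = S
    · rw [h, h, Finset.sum_eq_zero (fun u _ => bon_zero hc π h u)]
      linarith
    · have hb : ∑ u, bon G S u (π u) ≤ Fintype.card V := by
        refine (Finset.sum_le_sum (fun u _ => bon_le S u (π u))).trans ?_
        simp
      have hb' : g * ∑ u, bon G S u (π u) ≤ Fintype.card V * g := by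
        rw [mul_comm]; exact mul_le_mul_of_nonneg_right hb hg.le
      have m1 := hmaxS _ (colS_IsM hc π true)
      have m2 := hmaxS _ (colS_IsM hc π false)
      by_cases h1 : colS G c π true = S
      · have h2 : colS G c π false ≠ S := fun h2 => h (by intro b; cases b <;> assumption)
        have := gap _ (colS_IsM hc π false) h2
        linarith
      · have := gap _ (colS_IsM hc π true) h1
        linarith)
  have hMw : ∀ i j, relM G S i j → p i + q j = W i j := by
    intro i j h
    have := hs i
    rw [s1 _ _ h] at this
    rw [← this]
    have hne : i ≠ j := h.1.ne
    simp [Amat, bon, h.1, h, hne]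
  refine ⟨fun i => (p i + q i) / 2, ?_, ?_, ?_, ?_⟩
  · intro i h
    have := hs i
    rw [s2 i h] at this
    have h0 : Amat G S W g i i = 0 := by simp [Amat, bon, h]
    simp only
    linarith
  · intro i j h
    have h0 : Amat G S W g i i = g := by
      have : ∃ j, relM G S i j := ⟨j, h⟩
      simp [Amat, bon, this]
    have := hpq i i
    simp only
    linarith
  · intro i j h
    have a1 := hMw _ _ h
    have a2 := hMw _ _ (hM.symm _ _ h)
    rw [hW j i] at a2
    simp only
    linarith
  · intro i j ha h
    have h' : ¬ relM G S j i := fun hh => h (hM.symm _ _ hh)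
    have a1 : Amat G S W g i j = W i j + g := by simp [Amat, bon, ha, h, ha.ne]
    have a2 : Amat G S W g j i = W i j + g := by simp [Amat, bon, ha.symm, h', ha.symm.ne, hW j i]
    have b1 := hpq i j
    have b2 := hpq j i
    simp only
    linarith
end dual

/-! ### final assembly -/
section final
open MeasureTheory

theorem pertW_mkE (G : SimpleGraph V) [DecidableRel G.Adj] (w : V → V → ℝ) (η : ℝ) (ω : Ed G → ℝ)
    {i j : V} (h : G.Adj i j) : pertW G w η ω i j = w i j + η * ω (mkE G h) := by
  simp only [pertW, dif_pos h]; rfl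

theorem pertW_symm (G : SimpleGraph V) [DecidableRel G.Adj] {w : V → V → ℝ}
    (hw : ∀ i j, w i j = w j i) (η : ℝ) (ω : Ed G → ℝ)
    (i j : V) : pertW G w η ω i j = pertW G w η ω j i := by
  by_cases h : G.Adj i j
  · have : mkE G h.symm = mkE G h := Subtype.ext Sym2.eq_swap
    rw [pertW_mkE G w η ω h, pertW_mkE G w η ω h.symm, this, hw]
  · have h' : ¬ G.Adj j i := fun hh => h hh.symm
    simp only [pertW, dif_neg h, dif_neg h', hw i j]

theorem num_bound {κ n E η ξ t : ℝ} (h0 : 0 < κ) (h1 : κ < 1) (hn : 0 < n) (hE : 0 < E)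
    (hη : 0 < η) (hξ : 0 < ξ) (ht : 32768 / (κ * (1 - κ)) * (n ^ 2 * E / (η * ξ)) ^ 2 ≤ t) :
    64 * n * (2 * (1 / √(2 * κ * (1 - κ) * (t + 1)))) ≤ η * ξ / (2 * E) / n := by
  have hk : 0 < κ * (1 - κ) := mul_pos h0 (by linarith)
  set X := n ^ 2 * E / (η * ξ) with hX
  have hXp : 0 < X := by positivity
  have h2 : 32768 * X ^ 2 ≤ t * (κ * (1 - κ)) := by
    rw [div_mul_eq_mul_div, div_le_iff₀ hk] at ht
    exact ht
  have h3 : 256 * X ≤ √(2 * κ * (1 - κ) * (t + 1)) := by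
    apply Real.le_sqrt_of_sq_le
    nlinarith
  have h4 : 0 < √(2 * κ * (1 - κ) * (t + 1)) := lt_of_lt_of_le (by positivity) h3
  have h5 : 1 / √(2 * κ * (1 - κ) * (t + 1)) ≤ 1 / (256 * X) :=
    one_div_le_one_div_of_le (by positivity) h3
  calc 64 * n * (2 * (1 / √(2 * κ * (1 - κ) * (t + 1)))) ≤ 64 * n * (2 * (1 / (256 * X))) := by
        gcongr
    _ = η * ξ / (2 * E) / n := by
        rw [hX]; field_simp; norm_num

theorem num_bound2 {κ t : ℝ} (h0 : 0 < κ) (h1 : κ < 1) (ht : 0 < t) :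
    4 * (2 * (1 / √(2 * κ * (1 - κ) * (t + 1)))) ≤ 12 / √(Real.pi * κ * (1 - κ) * t) := by
  have hk : 0 < κ * (1 - κ) := mul_pos h0 (by linarith)
  have hpi := Real.pi_pos
  have hkt : 0 < κ * (1 - κ) * t := by positivity
  have hp : 0 < Real.pi * κ * (1 - κ) * t := by
    have : Real.pi * κ * (1 - κ) * t = Real.pi * (κ * (1 - κ) * t) := by ring
    rw [this]; positivity
  have hq : 0 < 2 * κ * (1 - κ) * (t + 1) := by nlinarith
  have e1 : 0 < √(Real.pi * κ * (1 - κ) * t) := Real.sqrt_pos.mpr hp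
  have e2 : 0 < √(2 * κ * (1 - κ) * (t + 1)) := Real.sqrt_pos.mpr hq
  have key : 2 * √(Real.pi * κ * (1 - κ) * t) ≤ 3 * √(2 * κ * (1 - κ) * (t + 1)) := by
    have : √(Real.pi * κ * (1 - κ) * t) ≤ 3 / 2 * √(2 * κ * (1 - κ) * (t + 1)) := by
      apply Real.sqrt_le_iff.mpr
      refine ⟨by positivity, ?_⟩
      rw [mul_pow, Real.sq_sqrt hq.le]
      have := Real.pi_lt_four
      nlinarith [mul_pos (sub_pos.mpr this) hkt]
    linarith
  rw [le_div_iff₀ e1]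
  have : 4 * (2 * (1 / √(2 * κ * (1 - κ) * (t + 1)))) * √(Real.pi * κ * (1 - κ) * t) =
    (8 * √(Real.pi * κ * (1 - κ) * t)) / √(2 * κ * (1 - κ) * (t + 1)) := by ring
  rw [this, div_le_iff₀ e2]
  linarith

theorem good_case (G : SimpleGraph V) [DecidableRel G.Adj] [Nonempty V] {κ : ℝ} (h0 : 0 < κ)
    (h1 : κ < 1) {c : V → Bool} (hc : ∀ i j, G.Adj i j → c i ≠ c j)
    {w : V → V → ℝ} (hw : GoodW G w) (hw1 : ∀ i j, G.Adj i j → w i j ≤ 1)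
    {ξ η : ℝ} (hξ : 0 < ξ) (hη : 0 < η) (hη1 : η < 1) {α0 : V → V → ℝ}
    (hα : ∀ i j, G.Adj i j → α0 i j ∈ Set.Icc (0 : ℝ) 2) (hE : 0 < G.edgeFinset.card)
    {ω : Ed G → ℝ} (hω : ∀ e, ω e ∈ Set.Icc (0 : ℝ) 1) {val : Ed G → ℝ}
    (hval : ∀ i j (h : G.Adj i j), val (mkE G h) = pertW G w η ω i j)
    {S : Finset (Ed G)} (hS : IsM G S)
    (gap : ∀ S', IsM G S' → S' ≠ S →
      ∑ e ∈ S', val e + η * ξ / (2 * G.edgeFinset.card) ≤ ∑ e ∈ S, val e)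
    (t : ℕ) (ht : 32768 / (κ * (1 - κ)) * (((Fintype.card V : ℝ) ^ 2 * (G.edgeFinset.card : ℝ)) /
                  (η * ξ)) ^ 2 ≤ t) :
    Induces G (offer (pertW G w η ω) (dyn G (pertW G w η ω) κ α0 t)) (relM G S) ∧
                IsEpsNB G (pertW G w η ω) (relM G S)
                  (earn G (pertW G w η ω) (dyn G (pertW G w η ω) κ α0 t))
                  (12 / Real.sqrt (Real.pi * κ * (1 - κ) * t)) := by
  have hEr : (0 : ℝ) < G.edgeFinset.card := by exact_mod_cast hE
  have hnr1 : (1 : ℝ) ≤ Fintype.card V := by exact_mod_cast Fintype.card_pos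
  have hnr : (0 : ℝ) < Fintype.card V := by linarith
  have hk : 0 < κ * (1 - κ) := mul_pos h0 (by linarith)
  have hs := pertW_symm G hw.1 η ω
  have hW : ∀ i j, G.Adj i j → 0 < pertW G w η ω i j ∧ pertW G w η ω i j ≤ 2 := by
    intro i j h
    rw [pertW_mkE G w η ω h]
    have := hω (mkE G h)
    have p := hw.2 _ _ h
    have p' := hw1 _ _ h
    have q1 : 0 ≤ η * ω (mkE G h) := mul_nonneg hη.le this.1
    have q2 : η * ω (mkE G h) ≤ 1 := by nlinarith [this.1, this.2]
    constructor <;> linarith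
  set g := η * ξ / (2 * G.edgeFinset.card) / Fintype.card V with hg
  have hgp : 0 < g := by positivity
  have hng : Fintype.card V * g = η * ξ / (2 * G.edgeFinset.card) := by rw [hg]; field_simp
  obtain ⟨y, y1, y2, y3, y4⟩ := dual_of_gap hc hs hval hS hgp (by
    intro S' a b
    rw [hng]; exact gap S' a b)
  have htp : (0 : ℝ) < t := lt_of_lt_of_le (by positivity) ht
  have hn1 := num_bound h0 h1 hnr hEr hη hξ ht
  set ε : ℝ := 2 * (1 / √(2 * κ * (1 - κ) * ((t : ℝ) + 1))) with hε
  have hε0 : 0 ≤ ε := by positivity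
  have hfix : IsEpsFixedPt G (pertW G w η ω) (dyn G (pertW G w η ω) κ α0 t) ε := by
    intro i j hij
    exact dyn_fix h0 h1 (by norm_num) (fun i j h => ⟨(hW i j h).1.le, (hW i j h).2⟩)
      (fun i j h => ⟨(hα i j h).1, (hα i j h).2⟩) t i j hij
  have hvalid : ValidMsg G (dyn G (pertW G w η ω) κ α0 t) := by
    intro i j hij
    exact (dyn_range h0 h1 (by norm_num) (fun i j h => ⟨(hW i j h).1.le, (hW i j h).2⟩)
      (fun i j h => ⟨(hα i j h).1, (hα i j h).2⟩) t i j hij).1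
  obtain ⟨r1, r2, r3, r4⟩ := core hs (fun i j h => (hW i j h).1) hvalid hfix (relM_matching hS) hgp
    hε0 hn1 (by nlinarith) y1 y2 y3 y4
  exact ⟨r1, r2, r3, fun i j h => (r4 i j h).trans (num_bound2 h0 h1 htp)⟩
end final


/-- On bipartite networks with weights in `[0,1]`, after an i.i.d.
uniform `[0,η]` perturbation of the weights, with probability at least `1 − ξ` there
is a matching `M` that is induced by all iterates `α^t` with `t ≥ T* = C(n²|E|/(ηξ))²`,
and `(γ^t, M)` is a `(12/√(π κ(1−κ)t))`-NB solution of the perturbed instance. -/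
theorem bipartite_polynomial_convergence (κ : ℝ) (hκ : κ ∈ Set.Ioo (0 : ℝ) 1) :
    ∃ C : ℝ, 0 < C ∧
      ∀ (V : Type) [Fintype V] [DecidableEq V]
        (G : SimpleGraph V) [DecidableRel G.Adj], G.Colorable 2 →
        ∀ w : V → V → ℝ, GoodW G w → (∀ i j, G.Adj i j → w i j ≤ 1) →
        ∀ ξ η : ℝ, ξ ∈ Set.Ioo (0 : ℝ) 1 → η ∈ Set.Ioo (0 : ℝ) 1 →
        ∀ α0 : V → V → ℝ, (∀ i j, G.Adj i j → α0 i j ∈ Set.Icc (0 : ℝ) 2) →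
        ENNReal.ofReal (1 - ξ) ≤
          (MeasureTheory.Measure.pi fun _ : {e : Sym2 V // e ∈ G.edgeFinset} =>
              MeasureTheory.volume.restrict (Set.Icc (0 : ℝ) 1))
            {ω | ∃ M : V → V → Prop,
              ∀ t : ℕ,
                C * (((Fintype.card V : ℝ) ^ 2 * (G.edgeFinset.card : ℝ)) /
                  (η * ξ)) ^ 2 ≤ t →
                Induces G (offer (pertW G w η ω) (dyn G (pertW G w η ω) κ α0 t)) M ∧
                IsEpsNB G (pertW G w η ω) M
                  (earn G (pertW G w η ω) (dyn G (pertW G w η ω) κ α0 t))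
                  (12 / Real.sqrt (Real.pi * κ * (1 - κ) * t))} := by
  obtain ⟨h0, h1⟩ := hκ
  have hk : 0 < κ * (1 - κ) := mul_pos h0 (by linarith)
  refine ⟨32768 / (κ * (1 - κ)), by positivity, ?_⟩
  intro V _ _ G _ hcol w hw hw1 ξ η hξ hη α0 hα
  have inst : ∀ _ : Ed G, MeasureTheory.IsProbabilityMeasure
    (MeasureTheory.volume.restrict (Set.Icc (0 : ℝ) 1)) := fun _ => ⟨by simp⟩
  set μ := (MeasureTheory.Measure.pi fun _ : {e : Sym2 V // e ∈ G.edgeFinset} =>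
              MeasureTheory.volume.restrict (Set.Icc (0 : ℝ) 1)) with hμ
  have hμ1 : μ Set.univ = 1 := by
    rw [hμ, MeasureTheory.Measure.pi_univ]; simp
  by_cases hE : G.edgeFinset.card = 0
  · have hno : ∀ i j, ¬ G.Adj i j := by
      intro i j h
      have : s(i, j) ∈ G.edgeFinset := by simpa using h
      rw [Finset.card_eq_zero.mp hE] at this
      simp at this
    have hz : ∀ i : V, G.neighborFinset i = ∅ := by
      intro i
      ext j
      simp [hno i j]
    have huniv : ∀ A : Set ((Ed G) → ℝ), (∀ ω, ω ∈ A) → ENNReal.ofReal (1 - ξ) ≤ μ A := by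
      intro A hA
      rw [Set.eq_univ_of_forall hA, hμ1]
      exact ENNReal.ofReal_le_one.mpr (by linarith [hξ.1])
    apply huniv
    intro ω
    have hmat : IsMatching G (fun _ _ => False) := ⟨by simp, by simp, by simp⟩
    refine ⟨fun _ _ => False, fun t _ => ⟨⟨hmat, ?_, by simp⟩, ⟨hmat, ?_, by simp, ?_⟩, ?_, by simp [EpsBalanced]⟩⟩
    · rintro i ⟨k, hk, _⟩; exact absurd hk (hno _ _)
    · intro i; simp [earn, hz, fmax]
    · intro i; simp [earn, hz, fmax]
    · intro i j h; exact absurd h (hno _ _)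
  have hEp : 0 < G.edgeFinset.card := Nat.pos_of_ne_zero hE
  have hEr : (0 : ℝ) < G.edgeFinset.card := by exact_mod_cast hEp
  have hne : Nonempty V := by
    obtain ⟨e, he⟩ := Finset.card_pos.mp hEp
    exact ⟨e.out.1⟩
  obtain ⟨col⟩ := hcol
  let c : V → Bool := fun v => decide (col v = 0)
  have hc : ∀ i j, G.Adj i j → c i ≠ c j := by
    intro i j h hcc
    have hv : col i ≠ col j := col.valid h
    have hcc' : (col i = 0) ↔ (col j = 0) := by simpa [c] using hcc
    generalize col i = a at hv hcc'
    generalize col j = b at hv hcc'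
    revert a b
    decide
  classical
  let a : Ed G → ℝ := fun e => Sym2.lift ⟨w, fun i j => hw.1 i j⟩ e.1
  have hsing : ∀ e : Ed G, IsM G {e} := by
    intro e v f hf f' hf' _ _
    rw [Finset.mem_singleton] at hf hf'
    rw [hf, hf']
  have hemp : IsM G ∅ := by
    intro v f hf
    simp at hf
  obtain ⟨bad, hbad, hgood⟩ := isolation (ι := Ed G) (Finset.univ.filter fun S => IsM G S)
    (fun e => ⟨{e}, by simp [hsing e], by simp⟩) (fun e => ⟨∅, by simp [hemp], by simp⟩)
    ⟨∅, by simp [hemp]⟩ a (g := η * ξ / (2 * G.edgeFinset.card)) hη.1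
    (by have := hη.1; have := hξ.1; positivity)
  have hcard : Fintype.card (Ed G) = G.edgeFinset.card := Fintype.card_coe _
  have hbad' : μ bad ≤ ENNReal.ofReal ξ := by
    refine hbad.trans (ENNReal.ofReal_le_ofReal (le_of_eq ?_))
    rw [hcard]
    have := hη.1
    field_simp
  have hbox : μ {ω | ¬ ∀ e, ω e ∈ Set.Icc (0 : ℝ) 1} = 0 := by
    have : {ω : Ed G → ℝ | ¬ ∀ e, ω e ∈ Set.Icc (0 : ℝ) 1} =
        ⋃ e, (fun ω => ω e) ⁻¹' (Set.Icc (0 : ℝ) 1)ᶜ := by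
      ext ω; simp
    rw [this, MeasureTheory.measure_iUnion_null_iff]
    intro e
    have hmp := @MeasureTheory.measurePreserving_eval _ _ _ _
      (fun _ : Ed G => MeasureTheory.volume.restrict (Set.Icc (0 : ℝ) 1)) inst e
    have h2 := hmp.measure_preimage (s := (Set.Icc (0 : ℝ) 1)ᶜ)
      (measurableSet_Icc.compl.nullMeasurableSet)
    refine h2.trans ?_
    rw [MeasureTheory.Measure.restrict_apply measurableSet_Icc.compl]
    simp
  have hfin : ∀ A : Set (Ed G → ℝ), (∀ ω, (∀ e, ω e ∈ Set.Icc (0 : ℝ) 1) → ω ∉ bad → ω ∈ A) →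
      ENNReal.ofReal (1 - ξ) ≤ μ A := by
    intro A hA
    rw [ENNReal.ofReal_sub _ hξ.1.le, ENNReal.ofReal_one, tsub_le_iff_right, ← hμ1]
    have hsub : (Set.univ : Set (Ed G → ℝ)) ⊆
        (A ∪ bad) ∪ {ω | ¬ ∀ e, ω e ∈ Set.Icc (0 : ℝ) 1} := by
      intro ω _
      by_cases q1 : ∀ e, ω e ∈ Set.Icc (0 : ℝ) 1
      · by_cases q2 : ω ∈ bad
        · exact Or.inl (Or.inr q2)
        · exact Or.inl (Or.inl (hA ω q1 q2))
      · exact Or.inr q1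
    calc μ Set.univ ≤ μ ((A ∪ bad) ∪ {ω | ¬ ∀ e, ω e ∈ Set.Icc (0 : ℝ) 1}) :=
          MeasureTheory.measure_mono hsub
      _ ≤ μ (A ∪ bad) + 0 := by
          rw [← hbox]; exact MeasureTheory.measure_union_le _ _
      _ ≤ μ A + μ bad := by rw [add_zero]; exact MeasureTheory.measure_union_le _ _
      _ ≤ μ A + ENNReal.ofReal ξ := by gcongr
  apply hfin
  intro ω hω hb
  obtain ⟨S, hS, hgap⟩ := hgood ω hb
  rw [Finset.mem_filter] at hS
  refine ⟨relM G S, fun t ht => ?_⟩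
  refine good_case G h0 h1 hc hw hw1 hξ.1 hη.1 hη.2 hα hEp hω (val := fun e => a e + η * ω e)
    ?_ hS.2 ?_ t ht
  · intro i j h
    rw [pertW_mkE G w η ω h]
    rfl
  · intro S' hS' hne'
    exact hgap S' (by simp [hS']) hne'

end EN
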